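/- arXiv:1010.0035 — 4 statements merged into one kernel-verified Lean document; each statement's English description precedes it below -/
import Mathlib

section
/- For every real λ, the characteristic function φ_m(λ) = Σ_{n∈Ω_m} π_m(n)·e^{iλ·ln n/ln p_m} = ∏_{j=1}^m ( p_j/(1+p_j) + e^{iλ·ln p_j/ln p_m}/(1+p_j) ) converges, as m→∞, to φ(λ) = exp( ∫_0^1 (e^{iλv}−1)/v dv ), where the integrand is extended continuously by the value iλ at v=0. Consequently the distributions of ζ_m = (1/ln p_m)·Σ_{j=1}^m ν_j·ln p_j under Π_m converge weakly to the infinitely divisible law with characteristic function φ. -/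
open Filter MeasureTheory
open scoped Topology

noncomputable section

/-- The `j`-th prime number, `0`-indexed: `nthPrime 0 = 2`, `nthPrime 1 = 3`, … -/
def nthPrime (j : ℕ) : ℕ := Nat.nth Nat.Prime j

/-- The partition function `Z_m = ∏_{j=1}^m (1 + 1/p_j)`. -/
def Zm (m : ℕ) : ℝ := ∏ j ∈ Finset.range m, (1 + 1 / (nthPrime j : ℝ))

/-- The mass `π_m(n) = 1/(Z_m n)` of `n = ∏ p_j^{ν_j}`, parametrized by `ν ∈ {0,1}^m`. -/
def mass (m : ℕ) (ν : Fin m → Bool) : ℝ :=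
  (1 / Zm m) * ∏ j : Fin m, (if ν j then (nthPrime j : ℝ) else 1)⁻¹

/-- `ζ_m = (1/ln p_m) ∑_{j=1}^m ν_j ln p_j`. -/
def zetam (m : ℕ) (ν : Fin m → Bool) : ℝ :=
  (1 / Real.log (nthPrime (m - 1))) * ∑ j : Fin m, (if ν j then Real.log (nthPrime j) else 0)

/-- The law of `ζ_m` under `Π_m`, as a measure on `ℝ`. -/
def lawZeta (m : ℕ) : Measure ℝ :=
  ∑ ν : Fin m → Bool, ENNReal.ofReal (mass m ν) • Measure.dirac (zetam m ν)

/-- `φ(λ) = exp(∫_0^1 (e^{iλv}-1)/v dv)`, the integrand extended continuously by `iλ` at `v=0`. -/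
def phi (lam : ℝ) : ℂ :=
  Complex.exp (∫ v in (0:ℝ)..1,
    if v = 0 then Complex.I * lam else (Complex.exp (Complex.I * lam * v) - 1) / v)

/-!
By Mertens' first theorem the weights `log p / (1 + p)` of the primes `p ≤ n` add up to
`log n + O(1)`. Divided by `log N`, this says that the total weight of the points `log p / log N`
in `[0, x]` is `x + O(1 / log N)` for `0 ≤ x ≤ 1`; summation by parts therefore gives
`∑_{p ≤ N} (log p / ((1 + p) log N)) G (log p / log N) → ∫₀¹ G` for every Lipschitz `G`.

The factor at `p` of the characteristic function is `1 + z_p` with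
`z_p = (e^{iλv} - 1) / (1 + p)` and `v = log p / log N`, which is exactly the summand above for
`G v = (e^{iλv} - 1) / v`. Hence `∑ z_p → ∫₀¹ G`, while `∑ |z_p|² = O(1 / log N)`, so the product
tends to `exp (∫₀¹ G)`. The limit is continuous in `λ`, so Lévy's continuity theorem yields weak
convergence.
-/

section RiemannSums

variable {E : Type*} [NormedAddCommGroup E]

lemma sum_range_succ_smul_by_parts {R M : Type*} [Ring R] [AddCommGroup M] [Module R M]
    (c : ℕ → R) (g : ℕ → M) (n : ℕ) :
    ∑ k ∈ Finset.range (n + 1), c k • g k = (∑ k ∈ Finset.range (n + 1), c k) • g n -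
      ∑ k ∈ Finset.range n, (∑ i ∈ Finset.range (k + 1), c i) • (g (k + 1) - g k) := by
  induction n with
  | zero => simp
  | succ n ih =>
    rw [Finset.sum_range_succ, ih, Finset.sum_range_succ c (n + 1),
      Finset.sum_range_succ (fun k => (∑ i ∈ Finset.range (k + 1), c i) • (g (k + 1) - g k)),
      add_smul, smul_sub]
    abel

lemma norm_sum_range_succ_smul_le {R : Type*} [NormedRing R] [Module R E] [IsBoundedSMul R E]
    {c : ℕ → R} {C : ℝ} (hc : ∀ n, ‖∑ k ∈ Finset.range n, c k‖ ≤ C) (g : ℕ → E) (n : ℕ) :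
    ‖∑ k ∈ Finset.range (n + 1), c k • g k‖ ≤
      C * (‖g n‖ + ∑ k ∈ Finset.range n, ‖g (k + 1) - g k‖) := by
  have norm_smul_le_mul (m : ℕ) (y : E) : ‖(∑ k ∈ Finset.range m, c k) • y‖ ≤ C * ‖y‖ :=
    (norm_smul_le _ _).trans (by gcongr; exact hc m)
  rw [sum_range_succ_smul_by_parts, mul_add, Finset.mul_sum]
  exact (norm_sub_le _ _).trans
    (add_le_add (norm_smul_le_mul _ _) (norm_sum_le_of_le _ fun k _ => norm_smul_le_mul _ _))

variable {G : ℝ → E} {K : NNReal} {x : ℕ → ℝ} {δ ε : ℝ}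

lemma sum_norm_sub_le_of_lipschitzWith (hG : LipschitzWith K G) (hx : Monotone x) (n : ℕ) :
    ∑ k ∈ Finset.range n, ‖G (x (k + 1)) - G (x k)‖ ≤ K * (x n - x 0) := by
  rw [← Finset.sum_range_sub, Finset.mul_sum]
  gcongr with k
  simpa [Real.norm_of_nonneg (sub_nonneg.2 (hx k.le_succ))] using
    hG.norm_sub_le (x (k + 1)) (x k)

variable [NormedSpace ℝ E] [CompleteSpace E]

lemma norm_smul_sub_integral_le_of_lipschitzWith (hG : LipschitzWith K G) {a b : ℝ}
    (hab : a ≤ b) :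
    ‖(b - a) • G b - ∫ v in a..b, G v‖ ≤ K * (b - a) * (b - a) := by
  have hconst : (b - a) • G b = ∫ _ in a..b, G b := (intervalIntegral.integral_const _).symm
  rw [hconst, ← intervalIntegral.integral_sub intervalIntegrable_const
    (hG.continuous.intervalIntegrable _ _)]
  have hbound : ∀ v ∈ Set.uIoc a b, ‖G b - G v‖ ≤ K * (b - a) := fun v hv => by
    rw [Set.uIoc_of_le hab] at hv
    refine (hG.norm_sub_le b v).trans ?_
    rw [Real.norm_of_nonneg (sub_nonneg.2 hv.2)]
    gcongr
    exact hv.1.le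
  simpa only [abs_of_nonneg (sub_nonneg.2 hab)] using
    intervalIntegral.norm_integral_le_of_norm_le_const hbound

lemma norm_riemannSum_sub_integral_le (hG : LipschitzWith K G) (hx : Monotone x)
    (hδ : ∀ k, x (k + 1) - x k ≤ δ) (n : ℕ) :
    ‖∑ k ∈ Finset.range n, (x (k + 1) - x k) • G (x (k + 1)) - ∫ v in x 0..x n, G v‖ ≤
      K * δ * (x n - x 0) := by
  rw [← intervalIntegral.sum_integral_adjacent_intervals
      fun k _ => hG.continuous.intervalIntegrable (x k) (x (k + 1)),
    ← Finset.sum_sub_distrib, ← Finset.sum_range_sub, Finset.mul_sum]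
  refine norm_sum_le_of_le _ fun k _ => ?_
  have hstep : x k ≤ x (k + 1) := hx k.le_succ
  refine (norm_smul_sub_integral_le_of_lipschitzWith hG hstep).trans ?_
  have : 0 ≤ x (k + 1) - x k := sub_nonneg.2 hstep
  gcongr
  exact hδ k

-- Summation by parts handles the discrepancy between the weights `w k` and the increments of `x`;
-- what remains is a Riemann sum.
lemma norm_weightedSum_sub_integral_le (hG : LipschitzWith K G) (hx : Monotone x)
    (hδ : ∀ k, x (k + 1) - x k ≤ δ) {w : ℕ → ℝ}
    (hw : ∀ n, |∑ k ∈ Finset.range n, w k - (x n - x 0)| ≤ ε) (n : ℕ) :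
    ‖∑ k ∈ Finset.range (n + 1), w k • G (x (k + 1)) - ∫ v in x 0..x (n + 1), G v‖ ≤
      ε * (‖G (x (n + 1))‖ + K * (x (n + 1) - x 1)) + K * δ * (x (n + 1) - x 0) := by
  have hdiscrepancy : ∀ n, ‖∑ k ∈ Finset.range n, (w k - (x (k + 1) - x k))‖ ≤ ε := fun n => by
    rw [Finset.sum_sub_distrib, Finset.sum_range_sub]
    exact hw n
  have hsplit : ∑ k ∈ Finset.range (n + 1), w k • G (x (k + 1)) =
      ∑ k ∈ Finset.range (n + 1), (w k - (x (k + 1) - x k)) • G (x (k + 1)) +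
        ∑ k ∈ Finset.range (n + 1), (x (k + 1) - x k) • G (x (k + 1)) := by
    simp only [sub_smul, Finset.sum_sub_distrib, sub_add_cancel]
  have hε : 0 ≤ ε := (norm_nonneg _).trans (hdiscrepancy 0)
  rw [hsplit, add_sub_assoc]
  refine norm_add_le_of_le ?_ (norm_riemannSum_sub_integral_le hG hx hδ (n + 1))
  refine (norm_sum_range_succ_smul_le hdiscrepancy (fun k => G (x (k + 1))) n).trans ?_
  gcongr
  exact sum_norm_sub_le_of_lipschitzWith hG (fun _ _ h => hx (Nat.succ_le_succ h)) n

lemma monotone_log_natCast : Monotone fun n : ℕ => Real.log n := by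
  intro m n hmn
  rcases m.eq_zero_or_pos with rfl | hm
  · simpa using Real.log_natCast_nonneg n
  · exact Real.log_le_log (by positivity) (by exact_mod_cast hmn)

lemma log_natCast_succ_sub_log_le_one (k : ℕ) : Real.log (k + 1 : ℕ) - Real.log k ≤ 1 := by
  rcases k.eq_zero_or_pos with rfl | hk
  · simp
  have hk' : (1 : ℝ) ≤ k := by exact_mod_cast hk
  calc Real.log (k + 1 : ℕ) - Real.log k = Real.log ((k + 1) / k) := by
        rw [Real.log_div (by positivity) (by positivity), Nat.cast_succ]
    _ ≤ (k + 1) / k - 1 := Real.log_le_sub_one_of_pos (by positivity)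
    _ = 1 / k := by field_simp; ring
    _ ≤ 1 := by rw [div_le_one (by positivity)]; exact hk'

lemma tendsto_const_div_log_natCast_atTop (c : ℝ) :
    Tendsto (fun N : ℕ => c / Real.log N) atTop (𝓝 0) :=
  (Real.tendsto_log_atTop.comp tendsto_natCast_atTop_atTop).const_div_atTop c

lemma tendsto_sum_smul_log_div_log (hG : LipschitzWith K G) {a : ℕ → ℝ} {C : ℝ}
    (ha : ∀ n : ℕ, |∑ k ∈ Finset.range n, a k - Real.log n| ≤ C) :
    Tendsto (fun N : ℕ => ∑ k ∈ Finset.range N,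
        (a k / Real.log N) • G (Real.log (k + 1 : ℕ) / Real.log N))
      atTop (𝓝 (∫ v in (0 : ℝ)..1, G v)) := by
  rw [tendsto_iff_norm_sub_tendsto_zero]
  refine squeeze_zero' (Eventually.of_forall fun _ => norm_nonneg _) ?_
    (tendsto_const_div_log_natCast_atTop (C * (‖G 1‖ + K) + K))
  filter_upwards [eventually_ge_atTop 2] with N hN
  obtain ⟨n, rfl⟩ : ∃ n, N = n + 1 := ⟨N - 1, by lia⟩
  set L := Real.log (n + 1 : ℕ)
  have hL : 0 < L := Real.log_pos (by exact_mod_cast hN)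
  have hmono : Monotone fun k : ℕ => Real.log k / L := monotone_log_natCast.div_const hL.le
  have hmesh (k : ℕ) : Real.log (k + 1 : ℕ) / L - Real.log k / L ≤ 1 / L := by
    rw [← sub_div]
    gcongr
    exact log_natCast_succ_sub_log_le_one k
  have hweights (m : ℕ) : |∑ k ∈ Finset.range m, a k / L -
      (Real.log m / L - Real.log (0 : ℕ) / L)| ≤ C / L := by
    rw [← Finset.sum_div, Nat.cast_zero, Real.log_zero, zero_div, sub_zero, ← sub_div, abs_div,
      abs_of_pos hL]
    gcongr
    exact ha m
  have hmain := norm_weightedSum_sub_integral_le hG hmono hmesh hweights n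
  have hend : Real.log (n + 1 : ℕ) / L = 1 := div_self hL.ne'
  simp only [hend, Nat.cast_zero, Real.log_zero, Nat.cast_one, Real.log_one, zero_div,
    sub_zero, mul_one] at hmain
  exact hmain.trans_eq (by ring)

end RiemannSums

section DividedDifference

variable {E : Type*} [NormedAddCommGroup E] [NormedSpace ℝ E] [CompleteSpace E]
  {F F' : ℝ → E}

lemma dslope_eq_integral_of_hasDerivAt (hF : ∀ u, HasDerivAt F (F' u) u) (hF' : Continuous F')
    (a b : ℝ) : dslope F a b = ∫ t in (0 : ℝ)..1, F' (a + t * (b - a)) := by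
  rcases eq_or_ne b a with rfl | hab
  · simp [dslope_same, (hF b).deriv]
  have hftc : (b - a) • ∫ t in (0 : ℝ)..1, F' (a + t * (b - a)) = F (a + (b - a)) - F a :=
    intervalIntegral.integral_unitInterval_deriv_eq_sub (𝕜 := ℝ)
      (by simp only [smul_eq_mul]; fun_prop) fun t _ => hF _
  rw [add_sub_cancel, ← sub_smul_dslope] at hftc
  exact (smul_right_injective E (sub_ne_zero.2 hab) hftc).symm

lemma lipschitzWith_dslope {K : NNReal} (hF : ∀ u, HasDerivAt F (F' u) u)
    (hF' : LipschitzWith K F') (a : ℝ) : LipschitzWith K (dslope F a) := by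
  have hcont := hF'.continuous
  have hint (b : ℝ) : IntervalIntegrable (fun t => F' (a + t * (b - a))) volume 0 1 :=
    Continuous.intervalIntegrable (by fun_prop) 0 1
  refine LipschitzWith.of_dist_le_mul fun b c => ?_
  rw [dist_eq_norm, dslope_eq_integral_of_hasDerivAt hF hcont,
    dslope_eq_integral_of_hasDerivAt hF hcont, ← intervalIntegral.integral_sub (hint b) (hint c)]
  have hbound : ∀ t ∈ Set.uIoc (0 : ℝ) 1,
      ‖F' (a + t * (b - a)) - F' (a + t * (c - a))‖ ≤ K * dist b c := fun t ht => by
    rw [Set.uIoc_of_le zero_le_one] at ht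
    calc ‖F' (a + t * (b - a)) - F' (a + t * (c - a))‖
        ≤ K * dist (a + t * (b - a)) (a + t * (c - a)) := by
          rw [← dist_eq_norm]; exact hF'.dist_le_mul _ _
      _ = K * (t * dist b c) := by
        rw [dist_add_left, Real.dist_eq, ← mul_sub, sub_sub_sub_cancel_right, abs_mul,
          abs_of_pos ht.1, Real.dist_eq]
      _ ≤ K * dist b c := by
        gcongr
        exact mul_le_of_le_one_left dist_nonneg ht.2
  simpa using intervalIntegral.norm_integral_le_of_norm_le_const hbound

end DividedDifference

section InfinitesimalProducts

lemma norm_log_one_add_sub_self_le_sq {z : ℂ} (hz : ‖z‖ ≤ 1 / 2) :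
    ‖Complex.log (1 + z) - z‖ ≤ ‖z‖ ^ 2 := by
  have hinv : (1 - ‖z‖)⁻¹ ≤ 2 := inv_le_of_inv_le₀ (by norm_num) (by linarith)
  calc ‖Complex.log (1 + z) - z‖ ≤ ‖z‖ ^ 2 * (1 - ‖z‖)⁻¹ / 2 :=
        Complex.norm_log_one_add_sub_self_le (by linarith)
    _ ≤ ‖z‖ ^ 2 * 2 / 2 := by gcongr
    _ = ‖z‖ ^ 2 := by ring

theorem tendsto_prod_one_add_of_tendsto_sum {α ι : Type*} {l : Filter α} {s : α → Finset ι}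
    {z : α → ι → ℂ} {S : ℂ} (hsum : Tendsto (fun a => ∑ i ∈ s a, z a i) l (𝓝 S))
    (hsq : Tendsto (fun a => ∑ i ∈ s a, ‖z a i‖ ^ 2) l (𝓝 0)) :
    Tendsto (fun a => ∏ i ∈ s a, (1 + z a i)) l (𝓝 (Complex.exp S)) := by
  have hsmall : ∀ᶠ a in l, ∀ i ∈ s a, ‖z a i‖ ≤ 1 / 2 := by
    filter_upwards [hsq.eventually_le_const (show (0 : ℝ) < (1 / 2) ^ 2 by norm_num)] with a ha i hi
    refine le_of_sq_le_sq ?_ (by norm_num)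
    exact (Finset.single_le_sum (f := fun i => ‖z a i‖ ^ 2) (fun _ _ => by positivity) hi).trans ha
  have hlog : Tendsto (fun a => ∑ i ∈ s a, Complex.log (1 + z a i)) l (𝓝 S) := by
    have hdiff : Tendsto (fun a => ∑ i ∈ s a, (Complex.log (1 + z a i) - z a i)) l (𝓝 0) := by
      refine squeeze_zero_norm' ?_ hsq
      filter_upwards [hsmall] with a ha
      exact norm_sum_le_of_le _ fun i hi => norm_log_one_add_sub_self_le_sq (ha i hi)
    simpa [Finset.sum_sub_distrib] using hdiff.add hsum
  refine ((Complex.continuous_exp.tendsto S).comp hlog).congr' ?_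
  filter_upwards [hsmall] with a ha
  rw [Function.comp_apply, Complex.exp_sum]
  refine Finset.prod_congr rfl fun i hi => Complex.exp_log fun hzero => ?_
  have hnorm : ‖z a i‖ = 1 := by
    rw [eq_neg_of_add_eq_zero_right hzero, norm_neg, norm_one]
  linarith [ha i hi]

end InfinitesimalProducts

section LevyContinuity

variable {E : Type*} [NormedAddCommGroup E] [InnerProductSpace ℝ E] [MeasurableSpace E]

lemma continuous_charFun_probabilityMeasure [OpensMeasurableSpace E] (t : E) :
    Continuous fun ν : ProbabilityMeasure E => charFun (ν : Measure E) t := by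
  simp only [charFun_eq_integral_innerProbChar]
  exact continuous_iff_continuousAt.2 fun ν =>
    (ProbabilityMeasure.tendsto_iff_forall_integral_rclike_tendsto ℂ).1 tendsto_id
      (BoundedContinuousFunction.innerProbChar t)

theorem exists_tendsto_of_tendsto_charFun [BorelSpace E] [FiniteDimensional ℝ E]
    {μ : ℕ → ProbabilityMeasure E} {φ : E → ℂ} (hφ : ContinuousAt φ 0)
    (hμ : ∀ t, Tendsto (fun n => charFun (μ n : Measure E) t) atTop (𝓝 (φ t))) :
    ∃ ν : ProbabilityMeasure E,
      (∀ t, charFun (ν : Measure E) t = φ t) ∧ Tendsto μ atTop (𝓝 ν) := by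
  have htight := isTightMeasureSet_of_tendsto_charFun hφ hμ
  have hcompact : IsCompact (closure (Set.range μ)) := by
    refine isCompact_closure_of_isTightMeasureSet (htight.subset ?_)
    rintro _ ⟨_, ⟨n, rfl⟩, rfl⟩
    exact ⟨n, rfl⟩
  obtain ⟨ν, -, hcluster⟩ := hcompact.exists_mapClusterPt_of_frequently (l := atTop) (f := μ)
    (Frequently.of_forall fun n => subset_closure ⟨n, rfl⟩)
  have hν (t : E) : charFun (ν : Measure E) t = φ t := by
    have hcluster_charFun :=
      hcluster.continuousAt_comp (continuous_charFun_probabilityMeasure t).continuousAt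
    exact eq_of_nhds_neBot (ClusterPt.mono hcluster_charFun (hμ t))
  exact ⟨ν, hν, ProbabilityMeasure.tendsto_of_tendsto_charFun fun t => hν t ▸ hμ t⟩

end LevyContinuity

section Mertens

lemma summable_log_div_sq : Summable fun n : ℕ => Real.log n / (n : ℝ) ^ 2 := by
  have hsqrt : Summable fun n : ℕ => 2 * (n : ℝ) ^ (-(3 / 2) : ℝ) :=
    (Real.summable_nat_rpow.2 (by norm_num)).mul_left 2
  refine hsqrt.of_nonneg_of_le (fun n => div_nonneg (Real.log_natCast_nonneg n) (by positivity))
    fun n => ?_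
  rcases n.eq_zero_or_pos with rfl | hn
  · simp [Real.zero_rpow]
  have hn' : (0 : ℝ) < n := by exact_mod_cast hn
  rw [div_le_iff₀ (by positivity), mul_assoc, ← Real.rpow_natCast, ← Real.rpow_add hn']
  calc Real.log n ≤ (n : ℝ) ^ (1 / 2 : ℝ) / (1 / 2) :=
        Real.log_le_rpow_div hn'.le (by norm_num)
    _ = 2 * (n : ℝ) ^ (-(3 / 2) + (2 : ℕ) : ℝ) := by norm_num; ring

lemma sum_log_div_sq_le_tsum (s : Finset ℕ) :
    ∑ n ∈ s, Real.log n / (n : ℝ) ^ 2 ≤ ∑' n : ℕ, Real.log n / (n : ℝ) ^ 2 :=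
  summable_log_div_sq.sum_le_tsum s fun n _ =>
    div_nonneg (Real.log_natCast_nonneg n) (by positivity)

lemma primeFactors_factorial (N : ℕ) : N.factorial.primeFactors = Nat.primesLE N := by
  ext p
  rw [Nat.mem_primesLE, Nat.mem_primeFactors, and_comm]
  exact ⟨fun ⟨h, hp⟩ => ⟨hp.dvd_factorial.1 h.1, hp⟩,
    fun ⟨h, hp⟩ => ⟨⟨hp.dvd_factorial.2 h, N.factorial_ne_zero⟩, hp⟩⟩

lemma log_factorial_eq_sum_primesLE (N : ℕ) :
    Real.log N.factorial =
      ∑ p ∈ Nat.primesLE N, (N.factorial.factorization p : ℝ) * Real.log p := by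
  rw [Real.log_nat_eq_sum_factorization, Finsupp.sum, Nat.support_factorization,
    primeFactors_factorial]

lemma div_sub_one_le_factorization_factorial {p : ℕ} (hp : p.Prime) (N : ℕ) :
    (N : ℝ) / p - 1 ≤ N.factorial.factorization p := by
  have hmultiples : N / p ≤ (p * (N / p)).factorial.factorization p := by
    rw [Nat.factorization_factorial_mul hp]
    exact Nat.le_add_left _ _
  have hmono : (p * (N / p)).factorial.factorization p ≤ N.factorial.factorization p :=
    (Nat.factorization_le_iff_dvd (Nat.factorial_ne_zero _) (Nat.factorial_ne_zero _)).2
      (Nat.factorial_dvd_factorial (Nat.mul_div_le N p)) p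
  calc (N : ℝ) / p - 1 ≤ (N / p : ℕ) := by
        rw [← Nat.floor_div_eq_div (K := ℝ)]
        exact (Nat.sub_one_lt_floor _).le
    _ ≤ N.factorial.factorization p := by exact_mod_cast hmultiples.trans hmono

lemma factorization_factorial_le_mul_add {p : ℕ} (hp : p.Prime) (N : ℕ) :
    (N.factorial.factorization p : ℝ) ≤ N * (1 / p + 2 / (p : ℝ) ^ 2) := by
  have hp2 : (2 : ℝ) ≤ p := by exact_mod_cast hp.two_le
  calc (N.factorial.factorization p : ℝ) ≤ (N / (p - 1) : ℕ) := by
        exact_mod_cast Nat.factorization_factorial_le_div_pred hp N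
    _ ≤ N / (p - 1 : ℕ) := Nat.cast_div_le
    _ = N * (1 / (p - 1)) := by rw [Nat.cast_pred hp.pos, mul_one_div]
    _ ≤ N * (1 / p + 2 / (p : ℝ) ^ 2) := by
      gcongr
      rw [div_add_div _ _ (by positivity) (by positivity),
        div_le_div_iff₀ (by linarith) (by positivity)]
      nlinarith

lemma mul_sum_primesLE_log_div_le (N : ℕ) :
    N * ∑ p ∈ Nat.primesLE N, Real.log p / p ≤ Real.log N.factorial + Chebyshev.theta N := by
  rw [log_factorial_eq_sum_primesLE, Chebyshev.theta_eq_sum_primesLE_log, Finset.mul_sum,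
    ← Finset.sum_add_distrib]
  refine Finset.sum_le_sum fun p hp => ?_
  calc N * (Real.log p / p) = (N / p - 1) * Real.log p + Real.log p := by ring
    _ ≤ N.factorial.factorization p * Real.log p + Real.log p := by
      gcongr
      exact div_sub_one_le_factorization_factorial (Nat.prime_of_mem_primesLE hp) N

lemma log_factorial_le_mul_sum_primesLE (N : ℕ) :
    Real.log N.factorial ≤ N * (∑ p ∈ Nat.primesLE N, Real.log p / p +
      2 * ∑ p ∈ Nat.primesLE N, Real.log p / (p : ℝ) ^ 2) := by
  rw [log_factorial_eq_sum_primesLE, Finset.mul_sum, ← Finset.sum_add_distrib, Finset.mul_sum]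
  refine Finset.sum_le_sum fun p hp => ?_
  calc N.factorial.factorization p * Real.log p ≤ N * (1 / p + 2 / (p : ℝ) ^ 2) * Real.log p := by
        gcongr
        exact factorization_factorial_le_mul_add (Nat.prime_of_mem_primesLE hp) N
    _ = N * (Real.log p / p + 2 * (Real.log p / (p : ℝ) ^ 2)) := by ring

lemma log_factorial_le_mul_log (N : ℕ) : Real.log N.factorial ≤ N * Real.log N := by
  rw [← Real.log_pow]
  exact Real.log_le_log (by positivity) (by exact_mod_cast N.factorial_le_pow)

lemma mul_log_sub_one_le_log_factorial (N : ℕ) : N * (Real.log N - 1) ≤ Real.log N.factorial := by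
  rcases N.eq_zero_or_pos with rfl | hN
  · simp
  have hlog : 0 ≤ Real.log N := Real.log_natCast_nonneg N
  have hlog_pi : 0 ≤ Real.log (2 * Real.pi) := Real.log_nonneg (by linarith [Real.pi_gt_three])
  linarith [Stirling.le_log_factorial_stirling hN.ne']

theorem abs_sum_primesLE_log_div_sub_log_le (N : ℕ) :
    |∑ p ∈ Nat.primesLE N, Real.log p / p - Real.log N| ≤
      Real.log 4 + 1 + 2 * ∑' n : ℕ, Real.log n / (n : ℝ) ^ 2 := by
  have hlog4 : 0 ≤ Real.log 4 := Real.log_nonneg (by norm_num)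
  have htail := sum_log_div_sq_le_tsum (Nat.primesLE N)
  have hsum_nonneg : 0 ≤ ∑ p ∈ Nat.primesLE N, Real.log p / (p : ℝ) ^ 2 :=
    Finset.sum_nonneg fun p _ => div_nonneg (Real.log_natCast_nonneg p) (by positivity)
  rcases N.eq_zero_or_pos with rfl | hN
  · simpa using by linarith
  have hN' : (0 : ℝ) < N := by exact_mod_cast hN
  have hupper : ∑ p ∈ Nat.primesLE N, Real.log p / p ≤ Real.log N + Real.log 4 := by
    refine le_of_mul_le_mul_left ?_ hN'
    linarith [mul_sum_primesLE_log_div_le N, log_factorial_le_mul_log N,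
      Chebyshev.theta_le_log4_mul_x hN'.le]
  have hlower : Real.log N - 1 ≤ ∑ p ∈ Nat.primesLE N, Real.log p / p +
      2 * ∑ p ∈ Nat.primesLE N, Real.log p / (p : ℝ) ^ 2 :=
    le_of_mul_le_mul_left
      ((mul_log_sub_one_le_log_factorial N).trans (log_factorial_le_mul_sum_primesLE N)) hN'
  rw [abs_le]
  constructor <;> linarith

lemma log_div_sub_log_div_one_add_mem_Icc (n : ℕ) :
    Real.log n / n - Real.log n / (1 + n) ∈ Set.Icc 0 (Real.log n / (n : ℝ) ^ 2) := by
  rcases n.eq_zero_or_pos with rfl | hn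
  · simp
  have hn' : (0 : ℝ) < n := by exact_mod_cast hn
  have hdiff : Real.log n / n - Real.log n / (1 + n) = Real.log n / (n * (1 + n)) := by
    field_simp; ring
  rw [hdiff]
  refine ⟨by positivity, ?_⟩
  gcongr
  nlinarith

theorem exists_abs_sum_primesLE_log_div_one_add_sub_log_le :
    ∃ C : ℝ, ∀ N : ℕ, |∑ p ∈ Nat.primesLE N, Real.log p / (1 + p) - Real.log N| ≤ C := by
  refine ⟨Real.log 4 + 1 + 3 * ∑' n : ℕ, Real.log n / (n : ℝ) ^ 2, fun N => ?_⟩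
  have hdiff_nonneg : 0 ≤ ∑ p ∈ Nat.primesLE N, (Real.log p / p - Real.log p / (1 + p)) :=
    Finset.sum_nonneg fun p _ => (log_div_sub_log_div_one_add_mem_Icc p).1
  have hdiff_le : ∑ p ∈ Nat.primesLE N, (Real.log p / p - Real.log p / (1 + p)) ≤
      ∑' n : ℕ, Real.log n / (n : ℝ) ^ 2 :=
    (Finset.sum_le_sum fun p _ => (log_div_sub_log_div_one_add_mem_Icc p).2).trans
      (sum_log_div_sq_le_tsum _)
  rw [Finset.sum_sub_distrib] at hdiff_nonneg hdiff_le
  have hmertens := abs_le.1 (abs_sum_primesLE_log_div_sub_log_le N)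
  rw [abs_le]
  constructor <;> linarith

lemma sum_primesLE_eq_sum_range {M : Type*} [AddCommMonoid M] (F : ℕ → M) (N : ℕ) :
    ∑ p ∈ Nat.primesLE N, F p =
      ∑ k ∈ Finset.range N, if (k + 1).Prime then F (k + 1) else 0 := by
  rw [Nat.primesLE_eq_filter_range, Finset.sum_filter, Finset.sum_range_succ',
    if_neg Nat.not_prime_zero, add_zero]

theorem tendsto_sum_primesLE_smul_log_div_log {E : Type*} [NormedAddCommGroup E]
    [NormedSpace ℝ E] [CompleteSpace E] {G : ℝ → E} {K : NNReal} (hG : LipschitzWith K G) :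
    Tendsto (fun N : ℕ => ∑ p ∈ Nat.primesLE N,
        (Real.log p / (1 + p) / Real.log N) • G (Real.log p / Real.log N))
      atTop (𝓝 (∫ v in (0 : ℝ)..1, G v)) := by
  obtain ⟨C, hC⟩ := exists_abs_sum_primesLE_log_div_one_add_sub_log_le
  simp only [sum_primesLE_eq_sum_range] at hC ⊢
  refine (tendsto_sum_smul_log_div_log hG hC).congr fun N =>
    Finset.sum_congr rfl fun k _ => ?_
  split_ifs <;> simp

end Mertens

section LimitingCharacteristicFunction

lemma lipschitzWith_exp_I_mul : LipschitzWith 1 fun u : ℝ => Complex.exp (Complex.I * u) := by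
  refine LipschitzWith.of_dist_le_mul fun u v => ?_
  have hfactor : Complex.exp (Complex.I * u) - Complex.exp (Complex.I * v) =
      Complex.exp (Complex.I * v) * (Complex.exp (Complex.I * (u - v : ℝ)) - 1) := by
    rw [mul_sub, mul_one, ← Complex.exp_add, ← mul_add, ← Complex.ofReal_add, add_sub_cancel]
  rw [dist_eq_norm, hfactor, norm_mul, Complex.norm_exp_I_mul_ofReal, one_mul, NNReal.coe_one,
    one_mul, dist_eq_norm]
  exact Real.norm_exp_I_mul_ofReal_sub_one_le

lemma hasDerivAt_exp_I_mul (u : ℝ) :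
    HasDerivAt (fun u : ℝ => Complex.exp (Complex.I * u))
      (Complex.I * Complex.exp (Complex.I * u)) u := by
  simpa [mul_comm] using ((hasDerivAt_id u).ofReal_comp.const_mul Complex.I).cexp

/-- The integrand `v ↦ (e^{iλv} - 1) / v` of `phi`, extended continuously to `v = 0`; it is written
through the divided difference of `u ↦ e^{iu}`, from which it inherits Lipschitz continuity. -/
def phiIntegrand (lam v : ℝ) : ℂ :=
  lam * dslope (fun u : ℝ => Complex.exp (Complex.I * u)) 0 (lam * v)

lemma lipschitzWith_dslope_exp_I_mul :
    LipschitzWith 1 (dslope (fun u : ℝ => Complex.exp (Complex.I * u)) 0) := by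
  refine lipschitzWith_dslope hasDerivAt_exp_I_mul ?_ 0
  have hsmul := (lipschitzWith_smul Complex.I).comp lipschitzWith_exp_I_mul
  rwa [Complex.nnnorm_I, one_mul] at hsmul

lemma lipschitzWith_phiIntegrand (lam : ℝ) :
    LipschitzWith (‖lam‖₊ * ‖lam‖₊) (phiIntegrand lam) := by
  have hsmul := (lipschitzWith_smul (lam : ℂ)).comp
    (lipschitzWith_dslope_exp_I_mul.comp (lipschitzWith_smul lam))
  rwa [one_mul, Complex.nnnorm_real] at hsmul

lemma mul_phiIntegrand (lam v : ℝ) :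
    v * phiIntegrand lam v = Complex.exp (Complex.I * lam * v) - 1 := by
  have hslope := sub_smul_dslope (fun u : ℝ => Complex.exp (Complex.I * u)) 0 (lam * v)
  rw [sub_zero, Complex.real_smul] at hslope
  rw [phiIntegrand, ← mul_assoc, mul_comm (v : ℂ), ← Complex.ofReal_mul, hslope]
  simp [mul_assoc]

lemma phi_eq_exp_integral_phiIntegrand (lam : ℝ) :
    phi lam = Complex.exp (∫ v in (0 : ℝ)..1, phiIntegrand lam v) := by
  rw [phi]
  congr 1
  refine intervalIntegral.integral_congr_uIoo fun v hv => ?_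
  rw [Set.uIoo_of_le zero_le_one] at hv
  have hv : (v : ℂ) ≠ 0 := by exact_mod_cast hv.1.ne'
  rw [if_neg (by exact_mod_cast hv), ← mul_phiIntegrand, mul_div_cancel_left₀ _ hv]

lemma continuous_phi : Continuous phi := by
  have hcont : Continuous (Function.uncurry phiIntegrand) := by
    have := lipschitzWith_dslope_exp_I_mul.continuous
    unfold Function.uncurry phiIntegrand
    fun_prop
  simp only [funext phi_eq_exp_integral_phiIntegrand]
  exact Complex.continuous_exp.comp
    (intervalIntegral.continuous_parametric_intervalIntegral_of_continuous' hcont 0 1)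

end LimitingCharacteristicFunction

section PrimeProduct

/-- The contribution of the prime `p` to the characteristic function of `ζ_m`, where `N = p_m`: the
characteristic function at `λ log p / log N` of a Bernoulli variable with success probability
`1 / (1 + p)`. -/
def charFactor (lam : ℝ) (N p : ℕ) : ℂ :=
  (p : ℂ) / (1 + (p : ℂ)) +
    Complex.exp (Complex.I * lam * Real.log p / Real.log N) / (1 + (p : ℂ))

lemma smul_phiIntegrand_log_div_log (lam : ℝ) (N p : ℕ) :
    (Real.log p / (1 + p) / Real.log N) • phiIntegrand lam (Real.log p / Real.log N) =
      (Complex.exp (Complex.I * (lam * (Real.log p / Real.log N) : ℝ)) - 1) / (1 + p : ℝ) := by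
  rw [Complex.ofReal_mul, ← mul_assoc, ← mul_phiIntegrand, Complex.real_smul]
  push_cast
  ring

lemma charFactor_eq_one_add (lam : ℝ) (N p : ℕ) :
    charFactor lam N p =
      1 + (Real.log p / (1 + p) / Real.log N) • phiIntegrand lam (Real.log p / Real.log N) := by
  have hp : (1 + p : ℂ) ≠ 0 := by
    rw [add_comm]
    exact Nat.cast_add_one_ne_zero p
  have harg : Complex.I * lam * Real.log p / Real.log N =
      Complex.I * (lam * (Real.log p / Real.log N) : ℝ) := by
    push_cast
    ring
  rw [smul_phiIntegrand_log_div_log, charFactor, harg, Complex.ofReal_add, Complex.ofReal_one,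
    Complex.ofReal_natCast]
  field_simp
  ring

lemma norm_exp_I_mul_ofReal_sub_one_sq_le (u : ℝ) :
    ‖Complex.exp (Complex.I * u) - 1‖ ^ 2 ≤ 2 * |u| := by
  have htwo : ‖Complex.exp (Complex.I * u) - 1‖ ≤ 2 := by
    refine (norm_sub_le _ _).trans ?_
    rw [Complex.norm_exp_I_mul_ofReal, norm_one]
    norm_num
  rw [sq]
  exact mul_le_mul htwo Real.norm_exp_I_mul_ofReal_sub_one_le (norm_nonneg _) zero_le_two

lemma norm_smul_phiIntegrand_sq_le (lam : ℝ) (N p : ℕ) :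
    ‖(Real.log p / (1 + p) / Real.log N) • phiIntegrand lam (Real.log p / Real.log N)‖ ^ 2 ≤
      2 * |lam| / Real.log N * (Real.log p / (p : ℝ) ^ 2) := by
  rcases p.eq_zero_or_pos with rfl | hp
  · simp
  have hv : 0 ≤ Real.log p / Real.log N :=
    div_nonneg (Real.log_natCast_nonneg p) (Real.log_natCast_nonneg N)
  rw [smul_phiIntegrand_log_div_log, norm_div, div_pow, Complex.norm_real,
    Real.norm_of_nonneg (by positivity)]
  set v := Real.log p / Real.log N with hv_def
  calc ‖Complex.exp (Complex.I * (lam * v : ℝ)) - 1‖ ^ 2 / (1 + p) ^ 2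
      ≤ 2 * |lam * v| / (p : ℝ) ^ 2 := by
        gcongr
        · exact norm_exp_I_mul_ofReal_sub_one_sq_le _
        · linarith
    _ = 2 * |lam| / Real.log N * (Real.log p / (p : ℝ) ^ 2) := by
        rw [abs_mul, abs_of_nonneg hv, hv_def]; ring

lemma tendsto_sum_primesLE_norm_smul_phiIntegrand_sq (lam : ℝ) :
    Tendsto (fun N : ℕ => ∑ p ∈ Nat.primesLE N,
        ‖(Real.log p / (1 + p) / Real.log N) • phiIntegrand lam (Real.log p / Real.log N)‖ ^ 2)
      atTop (𝓝 0) := by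
  refine squeeze_zero (fun N => by positivity) (fun N => ?_) (tendsto_const_div_log_natCast_atTop
    (2 * |lam| * ∑' n : ℕ, Real.log n / (n : ℝ) ^ 2))
  refine (Finset.sum_le_sum fun p _ => norm_smul_phiIntegrand_sq_le lam N p).trans ?_
  rw [← Finset.mul_sum, mul_div_right_comm (2 * |lam|)]
  gcongr
  exact sum_log_div_sq_le_tsum _

theorem tendsto_prod_primesLE_charFactor (lam : ℝ) :
    Tendsto (fun N : ℕ => ∏ p ∈ Nat.primesLE N, charFactor lam N p) atTop (𝓝 (phi lam)) := by
  simp only [charFactor_eq_one_add, phi_eq_exp_integral_phiIntegrand]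
  exact tendsto_prod_one_add_of_tendsto_sum
    (tendsto_sum_primesLE_smul_log_div_log (lipschitzWith_phiIntegrand lam))
    (tendsto_sum_primesLE_norm_smul_phiIntegrand_sq lam)

lemma nthPrime_strictMono : StrictMono nthPrime :=
  Nat.nth_strictMono Nat.infinite_setOfPred_prime

lemma image_nthPrime_range_succ (m : ℕ) :
    (Finset.range (m + 1)).image nthPrime = Nat.primesLE (nthPrime m) := by
  ext p
  rw [Nat.mem_primesLE, Finset.mem_image]
  constructor
  · rintro ⟨j, hj, rfl⟩
    exact ⟨nthPrime_strictMono.monotone (Finset.mem_range_succ_iff.1 hj), Nat.prime_nth_prime j⟩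
  · rintro ⟨hle, hp⟩
    have hcount : nthPrime (Nat.count Nat.Prime p) = p := Nat.nth_count hp
    refine ⟨_, Finset.mem_range_succ_iff.2 ?_, hcount⟩
    rwa [← nthPrime_strictMono.le_iff_le, hcount]

theorem tendsto_prod_range_charFactor (lam : ℝ) :
    Tendsto (fun m : ℕ => ∏ j ∈ Finset.range m, charFactor lam (nthPrime (m - 1)) (nthPrime j))
      atTop (𝓝 (phi lam)) := by
  rw [← tendsto_add_atTop_iff_nat 1]
  refine ((tendsto_prod_primesLE_charFactor lam).comp nthPrime_strictMono.tendsto_atTop).congr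
    fun m => ?_
  rw [Function.comp_apply, ← image_nthPrime_range_succ,
    Finset.prod_image nthPrime_strictMono.injective.injOn, Nat.add_sub_cancel]

end PrimeProduct

section Law

lemma nthPrime_pos (j : ℕ) : 0 < nthPrime j := (Nat.prime_nth_prime j).pos

lemma mass_eq_prod (m : ℕ) (ν : Fin m → Bool) :
    mass m ν = ∏ j : Fin m,
      if ν j then 1 / (1 + nthPrime j : ℝ) else nthPrime j / (1 + nthPrime j : ℝ) := by
  rw [mass, Zm, Finset.prod_range, one_div, ← Finset.prod_inv_distrib, ← Finset.prod_mul_distrib]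
  refine Finset.prod_congr rfl fun j _ => ?_
  have hp : (0 : ℝ) < nthPrime j := by exact_mod_cast nthPrime_pos j
  split_ifs <;> field_simp <;> ring

lemma mass_nonneg (m : ℕ) (ν : Fin m → Bool) : 0 ≤ mass m ν := by
  rw [mass_eq_prod]
  exact Finset.prod_nonneg fun j _ => by split_ifs <;> positivity

lemma exp_I_mul_zetam (lam : ℝ) (m : ℕ) (ν : Fin m → Bool) :
    Complex.exp (Complex.I * lam * zetam m ν) = ∏ j : Fin m, if ν j then
      Complex.exp (Complex.I * lam * Real.log (nthPrime j) / Real.log (nthPrime (m - 1)))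
      else 1 := by
  have hsum : Complex.I * lam * zetam m ν = ∑ j : Fin m, if ν j then
      Complex.I * lam * Real.log (nthPrime j) / Real.log (nthPrime (m - 1)) else 0 := by
    rw [zetam, Finset.mul_sum, Complex.ofReal_sum, Finset.mul_sum]
    refine Finset.sum_congr rfl fun j _ => ?_
    split_ifs <;> push_cast <;> ring
  rw [hsum, Complex.exp_sum]
  exact Finset.prod_congr rfl fun j _ => by split_ifs <;> simp

lemma sum_mass_mul_exp_zetam (lam : ℝ) (m : ℕ) :
    ∑ ν : Fin m → Bool, (mass m ν : ℂ) * Complex.exp (Complex.I * lam * zetam m ν) =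
      ∏ j ∈ Finset.range m, charFactor lam (nthPrime (m - 1)) (nthPrime j) := by
  simp only [mass_eq_prod, exp_I_mul_zetam, Complex.ofReal_prod, ← Finset.prod_mul_distrib]
  rw [← Fintype.prod_sum fun (j : Fin m) (b : Bool) =>
    ((if b then 1 / (1 + nthPrime j : ℝ) else nthPrime j / (1 + nthPrime j : ℝ) : ℝ) : ℂ) *
      (if b then Complex.exp (Complex.I * lam * Real.log (nthPrime j) /
        Real.log (nthPrime (m - 1))) else 1), Finset.prod_range]
  refine Finset.prod_congr rfl fun j _ => ?_
  rw [Fintype.sum_bool, charFactor]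
  simp only [if_true, Bool.false_eq_true, if_false]
  push_cast
  ring

lemma sum_mass (m : ℕ) : ∑ ν : Fin m → Bool, mass m ν = 1 := by
  have hfactor (p : ℕ) : charFactor 0 (nthPrime (m - 1)) p = 1 := by
    simp [charFactor_eq_one_add, phiIntegrand]
  have hsum := sum_mass_mul_exp_zetam 0 m
  simp only [hfactor, Finset.prod_const_one, Complex.ofReal_zero, mul_zero, zero_mul,
    Complex.exp_zero, mul_one] at hsum
  exact_mod_cast hsum

instance isProbabilityMeasure_lawZeta (m : ℕ) : IsProbabilityMeasure (lawZeta m) := by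
  constructor
  simp only [lawZeta, Measure.finsetSum_apply, Measure.smul_apply, measure_univ, smul_eq_mul,
    mul_one]
  rw [← ENNReal.ofReal_sum_of_nonneg fun ν _ => mass_nonneg m ν, sum_mass, ENNReal.ofReal_one]

lemma charFun_real_eq_integral_exp_I_mul (μ : Measure ℝ) (t : ℝ) :
    charFun μ t = ∫ x, Complex.exp (Complex.I * t * x) ∂μ := by
  simp only [charFun_apply_real, mul_comm Complex.I, mul_right_comm]

theorem charFun_lawZeta (m : ℕ) (lam : ℝ) :
    charFun (lawZeta m) lam =
      ∏ j ∈ Finset.range m, charFactor lam (nthPrime (m - 1)) (nthPrime j) := by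
  rw [← sum_mass_mul_exp_zetam, charFun_real_eq_integral_exp_I_mul, lawZeta,
    integral_finsetSum_measure fun ν _ =>
      (integrable_dirac (by simp)).smul_measure ENNReal.ofReal_ne_top]
  refine Finset.sum_congr rfl fun ν _ => ?_
  rw [integral_smul_measure, integral_dirac, ENNReal.toReal_ofReal (mass_nonneg m ν),
    Complex.real_smul]

end Law

theorem characteristic_functions_converge_and_weak_convergence :
    (∀ lam : ℝ,
      Tendsto (fun m : ℕ => ∏ j ∈ Finset.range m,
          ((nthPrime j : ℂ) / (1 + (nthPrime j : ℂ)) +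
            Complex.exp (Complex.I * lam * Real.log (nthPrime j) /
              Real.log (nthPrime (m - 1))) / (1 + (nthPrime j : ℂ))))
        atTop (𝓝 (phi lam))) ∧
    ∃ μ : Measure ℝ, IsProbabilityMeasure μ ∧
      (∀ lam : ℝ, (∫ x, Complex.exp (Complex.I * lam * x) ∂μ) = phi lam) ∧
      ∀ f : BoundedContinuousFunction ℝ ℝ,
        Tendsto (fun m : ℕ => ∫ x, f x ∂(lawZeta m)) atTop (𝓝 (∫ x, f x ∂μ)) := by
  refine ⟨tendsto_prod_range_charFactor, ?_⟩
  have hcharFun (lam : ℝ) : Tendsto (fun m => charFun (lawZeta m) lam) atTop (𝓝 (phi lam)) := by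
    simp only [charFun_lawZeta]
    exact tendsto_prod_range_charFactor lam
  obtain ⟨μ, hμ, hweak⟩ := exists_tendsto_of_tendsto_charFun
    (μ := fun m => ⟨lawZeta m, isProbabilityMeasure_lawZeta m⟩)
    continuous_phi.continuousAt hcharFun
  refine ⟨μ, inferInstance, fun lam => ?_,
    ProbabilityMeasure.tendsto_iff_forall_integral_tendsto.1 hweak⟩
  rw [← charFun_real_eq_integral_exp_I_mul, hμ]

end
end

section
/- There exists a constant C>0 such that for all m≥1, | Σ_{j=1}^m 1/p_j − ln ln p_m | ≤ C; that is, the sum of the reciprocals of the first m primes equals ln ln p_m + O(1) as m→∞. -/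
open Filter
open scoped Topology

noncomputable section

/-!
By Legendre's formula, the exponent of `p` in `n!` lies between `n / p - 1` and `n / (p - 1)`.
Hence `log n!` differs from `n * ∑_{p ≤ n} log p / p` by at most the larger of
`θ n ≤ n * log 4` (Chebyshev) and `n * ∑ log p / (p * (p - 1)) = O(n)`. Since
`log n! = n * log n + O(n)`, this gives Mertens' first theorem
`∑_{p ≤ n} log p / p = log n + O(1)`.

Partial summation with weights `1 / log n` turns this into the estimate for `∑_{p ≤ n} 1 / p`.
-/

section PartialSummation

open Real

lemma abs_sub_le_of_forall_abs_sub_succ_le {G B : ℕ → ℝ} {m n : ℕ} (hmn : m ≤ n)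
    (hG : ∀ k ≥ m, |G (k + 1) - G k| ≤ B k - B (k + 1)) :
    |G n - G m| ≤ B m - B n := by
  calc |G n - G m| ≤ ∑ k ∈ Finset.Ico m n, (B k - B (k + 1)) := by
        rw [← Real.dist_eq, dist_comm]
        refine dist_le_Ico_sum_of_dist_le hmn fun {k} hk _ ↦ ?_
        rw [dist_comm, Real.dist_eq]
        exact hG k hk
    _ = B m - B n := by
        simpa only [neg_sub_neg] using Finset.sum_Ico_sub (fun k ↦ -B k) hmn

lemma abs_log_sub_log_sub_div_le {x y : ℝ} (hx : 0 < x) (hy : 0 < y) :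
    |log y - log x - (y - x) / y| ≤ (y - x) * (x⁻¹ - y⁻¹) := by
  have log_ratio_ge := one_sub_inv_le_log_of_pos (div_pos hy hx)
  have log_ratio_le := log_le_sub_one_of_pos (div_pos hy hx)
  rw [log_div hy.ne' hx.ne', inv_div] at log_ratio_ge
  rw [log_div hy.ne' hx.ne'] at log_ratio_le
  have increment_eq : (y - x) / y = 1 - x / y := by field_simp
  have error_eq : (y - x) * (x⁻¹ - y⁻¹) = (y / x - 1) - (1 - x / y) := by
    field_simp
  rw [abs_of_nonneg (by linarith), error_eq, increment_eq]
  linarith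

lemma abs_div_sub_one_le {a x C : ℝ} (hx : 0 < x) (ha : |a - x| ≤ C) :
    |a / x - 1| ≤ C / x := by
  rw [div_sub_one hx.ne', abs_div, abs_of_pos hx]
  gcongr

lemma abs_mul_inv_sub_inv_sub_log_sub_log_le {a x y C δ : ℝ} (hx : 0 < x) (hxy : x ≤ y)
    (hδ : y - x ≤ δ) (ha : |a - x| ≤ C) :
    |a * (x⁻¹ - y⁻¹) - (log y - log x)| ≤ (C + δ) * (x⁻¹ - y⁻¹) := by
  have hy : 0 < y := hx.trans_le hxy
  have weight_nonneg : 0 ≤ x⁻¹ - y⁻¹ := sub_nonneg.2 (inv_anti₀ hx hxy)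
  calc |a * (x⁻¹ - y⁻¹) - (log y - log x)|
      = |(a - x) * (x⁻¹ - y⁻¹) - (log y - log x - (y - x) / y)| := by
        congr 1
        field_simp
        ring
    _ ≤ |a - x| * (x⁻¹ - y⁻¹) + |log y - log x - (y - x) / y| := by
        refine (abs_sub _ _).trans_eq ?_
        rw [abs_mul, abs_of_nonneg weight_nonneg]
    _ ≤ C * (x⁻¹ - y⁻¹) + (y - x) * (x⁻¹ - y⁻¹) := by
        gcongr
        exact abs_log_sub_log_sub_div_le hx hy
    _ ≤ C * (x⁻¹ - y⁻¹) + δ * (x⁻¹ - y⁻¹) := by gcongr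
    _ = (C + δ) * (x⁻¹ - y⁻¹) := by ring

lemma exists_abs_sub_log_le_of_sub_eq_div {A F x : ℕ → ℝ} {C δ : ℝ} {m : ℕ}
    (hx : 0 < x m) (hmono : MonotoneOn x (Set.Ici m)) (hδ : ∀ n ≥ m, x (n + 1) - x n ≤ δ)
    (hA : ∀ n ≥ m, |A n - x n| ≤ C)
    (hF : ∀ n ≥ m, F (n + 1) - F n = (A (n + 1) - A n) / x (n + 1)) :
    ∃ K, ∀ n ≥ m, |F n - log (x n)| ≤ K := by
  have le_x : ∀ n ≥ m, x m ≤ x n := fun n hn ↦ hmono Set.self_mem_Ici hn hn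
  have x_pos : ∀ n ≥ m, 0 < x n := fun n hn ↦ hx.trans_le (le_x n hn)
  have C_nonneg : 0 ≤ C := (abs_nonneg _).trans (hA m le_rfl)
  have δ_nonneg : 0 ≤ δ :=
    (sub_nonneg.2 (le_x (m + 1) m.le_succ)).trans (hδ m le_rfl)
  -- Subtracting the boundary term `A n / x n` makes the increments absolutely summable.
  let G : ℕ → ℝ := fun n ↦ F n - A n / x n - log (x n)
  have G_step : ∀ n ≥ m,
      |G (n + 1) - G n| ≤ (C + δ) * (x n)⁻¹ - (C + δ) * (x (n + 1))⁻¹ := by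
    intro n hn
    have G_step_eq : G (n + 1) - G n =
        A n * ((x n)⁻¹ - (x (n + 1))⁻¹) - (log (x (n + 1)) - log (x n)) := by
      linear_combination hF n hn
    rw [G_step_eq, ← mul_sub]
    exact abs_mul_inv_sub_inv_sub_log_sub_log_le (x_pos n hn)
      (hmono hn (hn.trans n.le_succ) n.le_succ) (hδ n hn) (hA n hn)
  refine ⟨C / x m + 1 + (C + δ) * (x m)⁻¹ + |G m|, fun n hn ↦ ?_⟩
  have G_sub_le : |G n - G m| ≤ (C + δ) * (x m)⁻¹ := by
    have := x_pos n hn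
    exact (abs_sub_le_of_forall_abs_sub_succ_le hn G_step).trans
      (sub_le_self _ (by positivity))
  have ratio_sub_one_le : |A n / x n - 1| ≤ C / x m :=
    (abs_div_sub_one_le (x_pos n hn) (hA n hn)).trans
      (div_le_div_of_nonneg_left C_nonneg hx (le_x n hn))
  calc |F n - log (x n)| = |(A n / x n - 1) + 1 + (G n - G m) + G m| := by
        congr 1
        ring
    _ ≤ |A n / x n - 1| + |1| + |G n - G m| + |G m| :=
        (abs_add_le _ _).trans (by gcongr; exact abs_add_three _ _ _)
    _ ≤ C / x m + 1 + (C + δ) * (x m)⁻¹ + |G m| := by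
        rw [abs_one]
        gcongr

end PartialSummation

section PrimeSums

open Real
open scoped Nat

lemma log_factorial_eq_sum_primesLE_s2 (n : ℕ) :
    log (n ! : ℕ) = ∑ p ∈ Nat.primesLE n, ((n)!.factorization p : ℝ) * log p := by
  rw [log_nat_eq_sum_factorization]
  refine Finsupp.sum_of_support_subset _ (fun p hp ↦ ?_) _ (by simp)
  rw [Nat.support_factorization, Nat.mem_primeFactors] at hp
  exact Nat.mem_primesLE.2 ⟨hp.1.dvd_factorial.1 hp.2.1, hp.1⟩

lemma log_factorial_le (n : ℕ) : log (n ! : ℕ) ≤ n * log n := by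
  rw [← log_pow]
  exact log_le_log (mod_cast n.factorial_pos) (mod_cast n.factorial_le_pow)

lemma mul_log_sub_self_le_log_factorial {n : ℕ} (hn : n ≠ 0) :
    n * log n - n ≤ log (n ! : ℕ) := by
  have log_n_nonneg := log_natCast_nonneg n
  have log_two_pi_nonneg : 0 ≤ log (2 * π) := log_nonneg (by linarith [pi_gt_three])
  linarith [Stirling.le_log_factorial_stirling hn]

lemma div_le_factorization_factorial {p : ℕ} (hp : p.Prime) (n : ℕ) :
    n / p ≤ (n)!.factorization p := by
  rw [Nat.factorization_factorial hp (b := Nat.log p n + 2) (by omega)]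
  simpa only [pow_one] using Finset.single_le_sum (f := fun i ↦ n / p ^ i)
    (fun i _ ↦ Nat.zero_le _) (Finset.mem_Ico.2 ⟨le_rfl, by omega⟩ : 1 ∈ _)

lemma cast_div_le_factorization_factorial_add_one {p : ℕ} (hp : p.Prime) (n : ℕ) :
    (n : ℝ) / p ≤ (n)!.factorization p + 1 := by
  calc (n : ℝ) / p ≤ (n / p : ℕ) + 1 := by
        rw [← Nat.floor_div_eq_div (K := ℝ)]
        exact (Nat.lt_floor_add_one _).le
    _ ≤ (n)!.factorization p + 1 := by
        gcongr
        exact div_le_factorization_factorial hp n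

lemma factorization_factorial_le_cast_div_sub_one {p : ℕ} (hp : p.Prime) (n : ℕ) :
    ((n)!.factorization p : ℝ) ≤ n / (p - 1) := by
  calc ((n)!.factorization p : ℝ) ≤ (n / (p - 1) : ℕ) :=
        mod_cast Nat.factorization_factorial_le_div_pred hp n
    _ ≤ n / (p - 1) := by
        rw [← Nat.cast_pred hp.pos]
        exact Nat.cast_div_le

lemma mul_sum_log_div_le_log_factorial_add_theta (n : ℕ) :
    n * ∑ p ∈ Nat.primesLE n, log p / p ≤ log (n ! : ℕ) + Chebyshev.theta n := by
  rw [log_factorial_eq_sum_primesLE_s2, Chebyshev.theta_eq_sum_primesLE_log, Finset.mul_sum,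
    ← Finset.sum_add_distrib]
  refine Finset.sum_le_sum fun p hp ↦ ?_
  calc n * (log p / p) = n / p * log p := by ring
    _ ≤ ((n)!.factorization p + 1) * log p := by
        gcongr
        exact cast_div_le_factorization_factorial_add_one (Nat.prime_of_mem_primesLE hp) n
    _ = (n)!.factorization p * log p + log p := by ring

lemma log_factorial_le_mul_sum_log_div_add (n : ℕ) :
    log (n ! : ℕ) ≤ n * (∑ p ∈ Nat.primesLE n, log p / p +
      ∑ p ∈ Nat.primesLE n, log p / ((p : ℝ) * (p - 1))) := by
  rw [log_factorial_eq_sum_primesLE_s2, ← Finset.sum_add_distrib, Finset.mul_sum]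
  refine Finset.sum_le_sum fun p hp ↦ ?_
  have p_gt_one : (1 : ℝ) < p := mod_cast Nat.one_lt_of_mem_primesLE hp
  have p_ne_zero : (p : ℝ) ≠ 0 := by positivity
  have p_sub_one_ne_zero : (p : ℝ) - 1 ≠ 0 := (sub_pos.2 p_gt_one).ne'
  calc (n)!.factorization p * log p ≤ n / (p - 1) * log p := by
        gcongr
        exact factorization_factorial_le_cast_div_sub_one (Nat.prime_of_mem_primesLE hp) n
    _ = n * (log p / p + log p / ((p : ℝ) * (p - 1))) := by
        field_simp
        ring

lemma log_div_mul_sub_one_nonneg (n : ℕ) : 0 ≤ log n / ((n : ℝ) * (n - 1)) := by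
  rcases n.eq_zero_or_pos with rfl | hn
  · simp
  · have : (1 : ℝ) ≤ n := mod_cast hn
    exact div_nonneg (log_natCast_nonneg n) (mul_nonneg n.cast_nonneg (sub_nonneg.2 this))

lemma log_div_mul_sub_one_le (n : ℕ) :
    log n / ((n : ℝ) * (n - 1)) ≤ 4 * (1 / (n : ℝ) ^ (3 / 2 : ℝ)) := by
  rcases le_or_gt n 1 with hn | hn
  · interval_cases n <;> simp
  have two_le_n : (2 : ℝ) ≤ n := mod_cast hn
  have n_pos : (0 : ℝ) < n := by linarith
  have rpow_mul_rpow : (n : ℝ) ^ (1 / 2 : ℝ) * (n : ℝ) ^ (3 / 2 : ℝ) = (n : ℝ) ^ 2 := by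
    rw [← rpow_add n_pos]
    norm_num
  rw [mul_one_div, div_le_div_iff₀ (by nlinarith) (by positivity)]
  calc log n * (n : ℝ) ^ (3 / 2 : ℝ)
      ≤ (n : ℝ) ^ (1 / 2 : ℝ) / (1 / 2) * (n : ℝ) ^ (3 / 2 : ℝ) := by
        gcongr
        exact log_natCast_le_rpow_div n (by norm_num)
    _ = 2 * (n : ℝ) ^ 2 := by rw [← rpow_mul_rpow]; ring
    _ ≤ 4 * (n * (n - 1)) := by nlinarith

lemma summable_log_div_mul_sub_one : Summable fun n : ℕ ↦ log n / ((n : ℝ) * (n - 1)) :=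
  .of_nonneg_of_le log_div_mul_sub_one_nonneg log_div_mul_sub_one_le
    ((summable_one_div_nat_rpow.2 (by norm_num)).mul_left 4)

lemma sum_primesLE_log_div_le {n : ℕ} (hn : n ≠ 0) :
    ∑ p ∈ Nat.primesLE n, log p / p ≤ log n + log 4 := by
  have n_pos : (0 : ℝ) < n := by positivity
  refine le_of_mul_le_mul_left ?_ n_pos
  calc n * ∑ p ∈ Nat.primesLE n, log p / p ≤ log (n ! : ℕ) + Chebyshev.theta n :=
        mul_sum_log_div_le_log_factorial_add_theta n
    _ ≤ n * log n + log 4 * n :=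
        add_le_add (log_factorial_le n) (Chebyshev.theta_le_log4_mul_x n_pos.le)
    _ = n * (log n + log 4) := by ring

lemma log_sub_le_sum_primesLE_log_div {n : ℕ} (hn : n ≠ 0) :
    log n - (1 + ∑' k : ℕ, log k / ((k : ℝ) * (k - 1))) ≤
      ∑ p ∈ Nat.primesLE n, log p / p := by
  have n_pos : (0 : ℝ) < n := by positivity
  have log_sub_one_le : log n - 1 ≤ ∑ p ∈ Nat.primesLE n, log p / p +
      ∑ p ∈ Nat.primesLE n, log p / ((p : ℝ) * (p - 1)) := by
    refine le_of_mul_le_mul_left ?_ n_pos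
    calc n * (log n - 1) = n * log n - n := by ring
      _ ≤ log (n ! : ℕ) := mul_log_sub_self_le_log_factorial hn
      _ ≤ _ := log_factorial_le_mul_sum_log_div_add n
  linarith [summable_log_div_mul_sub_one.sum_le_tsum (Nat.primesLE n)
    fun k _ ↦ log_div_mul_sub_one_nonneg k]

theorem exists_abs_sum_primesLE_log_div_sub_log_le :
    ∃ C, ∀ n : ℕ, n ≠ 0 → |∑ p ∈ Nat.primesLE n, log p / p - log n| ≤ C := by
  refine ⟨max (log 4) (1 + ∑' k : ℕ, log k / ((k : ℝ) * (k - 1))), fun n hn ↦ ?_⟩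
  rw [abs_sub_le_iff, sub_le_iff_le_add', sub_le_comm]
  exact ⟨(sum_primesLE_log_div_le hn).trans (by gcongr; exact le_max_left _ _),
    le_trans (by gcongr; exact le_max_right _ _) (log_sub_le_sum_primesLE_log_div hn)⟩

lemma log_succ_sub_log_le_one (n : ℕ) : log (n + 1 : ℕ) - log n ≤ 1 := by
  rcases n.eq_zero_or_pos with rfl | hn
  · simp
  have one_le_n : (1 : ℝ) ≤ n := mod_cast hn
  rw [← log_div (by positivity) (by positivity)]
  calc log ((n + 1 : ℕ) / n) ≤ (n + 1 : ℕ) / n - 1 := log_le_sub_one_of_pos (by positivity)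
    _ = 1 / n := by
        push_cast
        field_simp
        ring
    _ ≤ 1 := by rwa [div_le_one (by positivity)]

lemma sum_primesLE_succ_one_div_sub {n : ℕ} (hn : n ≠ 0) :
    ∑ p ∈ Nat.primesLE (n + 1), 1 / (p : ℝ) - ∑ p ∈ Nat.primesLE n, 1 / (p : ℝ) =
      (∑ p ∈ Nat.primesLE (n + 1), log p / p - ∑ p ∈ Nat.primesLE n, log p / p) /
        log (n + 1 : ℕ) := by
  have log_pos : 0 < log (n + 1 : ℕ) := Real.log_pos (by exact_mod_cast (by omega : 1 < n + 1))
  rw [Nat.primesLE_succ]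
  split_ifs
  · simp only [Finset.sum_insert (Nat.notMem_primesLE n), add_sub_cancel_right]
    field_simp
  · simp

theorem exists_abs_sum_primesLE_one_div_sub_log_log_le :
    ∃ K, ∀ n ≥ 2, |∑ p ∈ Nat.primesLE n, 1 / (p : ℝ) - log (log n)| ≤ K := by
  obtain ⟨C, hC⟩ := exists_abs_sum_primesLE_log_div_sub_log_le
  refine exists_abs_sub_log_le_of_sub_eq_div (x := fun n : ℕ ↦ log n) (log_pos (by norm_num))
    (fun k hk l _ hkl ↦ ?_) (fun n _ ↦ log_succ_sub_log_le_one n)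
    (fun n hn ↦ hC n (by omega)) (fun n hn ↦ sum_primesLE_succ_one_div_sub (by omega))
  have k_pos : 0 < k := two_pos.trans_le hk
  exact log_le_log (mod_cast k_pos) (mod_cast hkl)

end PrimeSums

lemma sum_range_succ_nth {M : Type*} [AddCommMonoid M] {P : ℕ → Prop} [DecidablePred P]
    (hP : {k | P k}.Infinite) (f : ℕ → M) (n : ℕ) :
    ∑ j ∈ Finset.range (n + 1), f (Nat.nth P j) =
      ∑ k ∈ Finset.range (Nat.nth P n + 1) with P k, f k := by
  rw [← Finset.sum_image (Nat.nth_injective hP).injOn]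
  congr 1
  ext k
  simp only [Finset.mem_image, Finset.mem_filter, Finset.mem_range, Nat.lt_succ_iff]
  constructor
  · rintro ⟨j, hj, rfl⟩
    exact ⟨Nat.nth_monotone hP hj, Nat.nth_mem_of_infinite hP j⟩
  · rintro ⟨hk, hPk⟩
    exact ⟨Nat.count P k, Nat.le_nth_of_count_le hk, Nat.nth_count hPk⟩

/-- The sum of reciprocals of the first `m` primes is `ln ln p_m + O(1)`. -/
theorem sum_reciprocal_primes_eq_loglog_add_bigO :
    ∃ C : ℝ, 0 < C ∧ ∀ m : ℕ, 1 ≤ m →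
      |(∑ j ∈ Finset.range m, 1 / (nthPrime j : ℝ)) -
        Real.log (Real.log (nthPrime (m - 1)))| ≤ C := by
  obtain ⟨K, hK⟩ := exists_abs_sum_primesLE_one_div_sub_log_log_le
  refine ⟨max K 1, by positivity, fun m hm ↦ ?_⟩
  obtain ⟨n, rfl⟩ := Nat.exists_eq_add_of_le' hm
  have sum_eq : ∑ j ∈ Finset.range (n + 1), 1 / (nthPrime j : ℝ) =
      ∑ p ∈ Nat.primesLE (nthPrime n), 1 / (p : ℝ) :=
    sum_range_succ_nth Nat.infinite_setOfPred_prime (fun p ↦ 1 / (p : ℝ)) n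
  rw [sum_eq, Nat.add_sub_cancel]
  exact (hK _ (Nat.prime_nth_prime n).two_le).trans (le_max_left _ _)

end
end

section
/- For every real λ>0, ∫_0^1 (e^{iλv}−1)/v dv = −( γ + ∫_λ^∞ (cos u)/u du + ln λ ) + i·∫_0^λ (sin u)/u du, where ∫_λ^∞ (cos u)/u du denotes the convergent improper integral lim_{T→∞} ∫_λ^T (cos u)/u du, and the integrand (e^{iλv}−1)/v is extended continuously by the value iλ at v=0. -/
open Filter
open scoped Topology

/-!
Let `Ein z = ∫₀¹ (1 - e^{-zt}) / t dt`, an entire function with `Ein' z = (1 - e^{-z}) / z`. The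
left-hand side of the formula is `-Ein (-iλ)`, whose imaginary part is the sine integral, and
`∫ₐᵇ e^{iu} / u du = (Ein (-ia) - log a) - (Ein (-ib) - log b)`, so everything reduces to
`Re Ein (-ir) - log r → γ` as `r → ∞`. On the positive axis an integration by parts gives
`Ein r - log r → -∫₀^∞ e^{-t} log t dt = -Γ'(1) = γ`. Integrating `Ein'` along the arc from `r` to
`r e^w`, where `w = -iπ/2`, gives `Ein (r e^w) - Ein r = w - w ∫₀¹ exp (-r e^{sw}) ds`, and the last
integral tends to `0` by dominated convergence because the arc stays in the half-plane `Re z ≥ 0`.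
-/

section

open Complex MeasureTheory Set
open Real (eulerMascheroniConstant)

/-- The entire exponential integral `Ein`, the primitive of `(1 - e^{-z}) / z` vanishing at `0`. The
integrand takes the junk value `0` at `t = 0` instead of its limit `z`, which does not affect the
integral. -/
noncomputable def ein (z : ℂ) : ℂ :=
  ∫ t in (0 : ℝ)..1, (1 - exp (-(z * t))) / t

lemma intervalIntegrable_one_sub_exp_neg_mul_div (z : ℂ) (a b : ℝ) :
    IntervalIntegrable (fun t : ℝ ↦ (1 - exp (-(z * t))) / t) volume a b := by
  set f : ℝ → ℂ := fun t ↦ 1 - exp (-(z * t))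
  have hf : Continuous (dslope f 0) := by
    rw [← continuousOn_univ, continuousOn_dslope univ_mem]
    exact ⟨by fun_prop, by fun_prop⟩
  refine (hf.intervalIntegrable a b).congr_ae (ae_restrict_of_ae ?_)
  filter_upwards [Measure.ae_ne volume 0] with t ht
  simp [f, dslope_of_ne _ ht, slope_def_module, div_eq_inv_mul]

lemma hasDerivAt_ein (z : ℂ) : HasDerivAt ein (∫ t in (0 : ℝ)..1, exp (-(z * t))) z := by
  refine (intervalIntegral.hasDerivAt_integral_of_dominated_loc_of_deriv_le
    (F' := fun x t ↦ exp (-(x * t))) (bound := fun _ ↦ Real.exp (‖z‖ + 1))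
    (Metric.ball_mem_nhds z one_pos)
    (.of_forall fun x ↦
      (intervalIntegrable_one_sub_exp_neg_mul_div x 0 1).def'.aestronglyMeasurable)
    (intervalIntegrable_one_sub_exp_neg_mul_div z 0 1)
    (by fun_prop) (ae_of_all _ fun t ht x hx ↦ ?_) (by simp) (ae_of_all _ fun t ht x _ ↦ ?_)).2
  · rw [uIoc_of_le zero_le_one] at ht
    have norm_x : ‖x‖ ≤ ‖z‖ + 1 := by
      linarith [norm_le_norm_add_norm_sub z x, mem_ball_iff_norm'.1 hx]
    calc ‖exp (-(x * t))‖ ≤ Real.exp ‖-(x * t)‖ := norm_exp_le_exp_norm _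
      _ = Real.exp (‖x‖ * t) := by simp [abs_of_pos ht.1]
      _ ≤ Real.exp (‖z‖ + 1) := by
        gcongr
        exact (mul_le_of_le_one_right (norm_nonneg x) ht.2).trans norm_x
  · rw [uIoc_of_le zero_le_one] at ht
    have t_ne : (t : ℂ) ≠ 0 := ofReal_ne_zero.2 ht.1.ne'
    refine (((hasDerivAt_mul_const (t : ℂ)).neg.cexp.const_sub 1).div_const _).congr_deriv ?_
    simp [t_ne]

lemma hasDerivAt_ein_of_ne_zero {z : ℂ} (hz : z ≠ 0) :
    HasDerivAt ein ((1 - exp (-z)) / z) z := by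
  refine (hasDerivAt_ein z).congr_deriv ?_
  simp_rw [← neg_mul]
  rw [integral_exp_mul_complex (neg_ne_zero.2 hz), ← neg_div_neg_eq]
  simp

lemma ein_mul_ofReal (z : ℂ) (x : ℝ) :
    ein (z * x) = ∫ u in (0 : ℝ)..x, (1 - exp (-(z * u))) / u := by
  rcases eq_or_ne x 0 with rfl | hx
  · simp [ein]
  have hx' : (x : ℂ) ≠ 0 := ofReal_ne_zero.2 hx
  have rescale := intervalIntegral.smul_integral_comp_mul_left
    (fun u : ℝ ↦ (1 - exp (-(z * u))) / (u : ℂ)) x (a := 0) (b := 1)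
  rw [mul_zero, mul_one] at rescale
  rw [← rescale, ← intervalIntegral.integral_smul, ein]
  congr! 2 with t
  rw [real_smul, ofReal_mul, ← mul_div_assoc, mul_div_mul_left _ _ hx', mul_assoc]

lemma intervalIntegrable_exp_neg_mul_div (z : ℂ) {a b : ℝ} (ha : 0 < a) (hb : 0 < b) :
    IntervalIntegrable (fun u : ℝ ↦ exp (-(z * u)) / u) volume a b := by
  have ne_zero : ∀ u ∈ uIcc a b, (u : ℂ) ≠ 0 := fun u hu ↦
    ofReal_ne_zero.2 ((lt_min ha hb).trans_le hu.1).ne'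
  exact ContinuousOn.intervalIntegrable (.div (by fun_prop) (by fun_prop) ne_zero)

lemma integral_exp_neg_mul_div (z : ℂ) {a b : ℝ} (ha : 0 < a) (hb : 0 < b) :
    ∫ u in a..b, exp (-(z * u)) / u =
      (ein (z * a) - Real.log a) - (ein (z * b) - Real.log b) := by
  have hI := intervalIntegrable_one_sub_exp_neg_mul_div z
  have inv_integrable : IntervalIntegrable (fun u : ℝ ↦ ((1 / u : ℝ) : ℂ)) volume a b := by
    simpa using intervalIntegrable_exp_neg_mul_div 0 ha hb
  have integral_inv : ∫ u in a..b, ((1 / u : ℝ) : ℂ) = Real.log b - Real.log a := by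
    rw [intervalIntegral.integral_ofReal, integral_one_div_of_pos ha hb,
      Real.log_div hb.ne' ha.ne', ofReal_sub]
  calc ∫ u in a..b, exp (-(z * u)) / u
      = ∫ u in a..b, ((1 / u : ℝ) : ℂ) - (1 - exp (-(z * u))) / u := by
        congr! 2 with u
        push_cast
        ring
    _ = Real.log b - Real.log a - (ein (z * b) - ein (z * a)) := by
        rw [intervalIntegral.integral_sub inv_integrable (hI a b), integral_inv, ein_mul_ofReal,
          ein_mul_ofReal, intervalIntegral.integral_interval_sub_left (hI 0 b) (hI 0 a)]
    _ = _ := by ring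

lemma integral_log_mul_exp_neg_Ioi :
    ∫ t in Ioi (0 : ℝ), Real.log t * Real.exp (-t) = -eulerMascheroniConstant := by
  have gamma_eventuallyEq : Gamma =ᶠ[𝓝 1] GammaIntegral := by
    filter_upwards [(isOpen_lt continuous_const continuous_re).mem_nhds (by simp : (0 : ℝ) < re 1)]
      with s hs using Gamma_eq_integral hs
  have deriv_eq := (hasDerivAt_Gamma_one.congr_of_eventuallyEq gamma_eventuallyEq.symm).unique
    (hasDerivAt_GammaIntegral (by simp))
  simp only [sub_self, cpow_zero, one_mul, ← ofReal_mul] at deriv_eq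
  rw [integral_complex_ofReal] at deriv_eq
  exact_mod_cast deriv_eq.symm

lemma integrableOn_log_mul_exp_neg_Ioi :
    IntegrableOn (fun t ↦ Real.log t * Real.exp (-t)) (Ioi 0) := by
  -- The integral of a non-integrable function would be `0`, and `-γ ≠ 0`.
  refine not_imp_comm.1 integral_undef ?_
  rw [integral_log_mul_exp_neg_Ioi]
  linarith [Real.one_half_lt_eulerMascheroniConstant]

lemma continuousAt_mul_log_zero {f : ℝ → ℝ} (hf : DifferentiableAt ℝ f 0) (hf0 : f 0 = 0) :
    ContinuousAt (fun x ↦ f x * Real.log x) 0 := by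
  have factor (x : ℝ) : f x * Real.log x = dslope f 0 x * (x * Real.log x) := by
    linear_combination -Real.log x * (by simpa [hf0] using sub_smul_dslope f 0 x : x * _ = f x)
  simp_rw [factor]
  exact (continuousAt_dslope_same.2 hf).mul Real.continuous_mul_log.continuousAt

lemma ein_ofReal_sub_mul_log {r : ℝ} (hr : 0 ≤ r) :
    ein r - ((1 - Real.exp (-r)) * Real.log r : ℝ) =
      -((∫ t in (0 : ℝ)..r, Real.log t * Real.exp (-t) : ℝ) : ℂ) := by
  set g : ℝ → ℂ := fun x ↦ ein x - ((1 - Real.exp (-x)) * Real.log x : ℝ)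
  have g_cont : ContinuousOn g (Icc 0 r) := by
    have mul_log_cont : Continuous fun x ↦ (1 - Real.exp (-x)) * Real.log x := by
      refine continuous_iff_continuousAt.2 fun x ↦ ?_
      rcases eq_or_ne x 0 with rfl | hx
      · exact continuousAt_mul_log_zero (by fun_prop) (by simp)
      · fun_prop (disch := assumption)
    have ein_cont : Continuous ein :=
      continuous_iff_continuousAt.2 fun z ↦ (hasDerivAt_ein z).continuousAt
    fun_prop
  have g_deriv : ∀ x ∈ Ioo 0 r,
      HasDerivAt g (-((Real.log x * Real.exp (-x) : ℝ) : ℂ)) x := fun x hx ↦ by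
    have x_ne : x ≠ 0 := hx.1.ne'
    have mul_log_deriv := ((hasDerivAt_neg x).exp.const_sub 1).mul (Real.hasDerivAt_log x_ne)
    refine ((hasDerivAt_ein_of_ne_zero (ofReal_ne_zero.2 x_ne)).comp_ofReal.sub
      mul_log_deriv.ofReal_comp).congr_deriv ?_
    push_cast
    ring
  have integrand_integrable :
      IntervalIntegrable (fun t ↦ ((Real.log t * Real.exp (-t) : ℝ) : ℂ)) volume 0 r :=
    (intervalIntegrable_iff_integrableOn_Ioc_of_le hr).2
      (integrableOn_log_mul_exp_neg_Ioi.mono_set Ioc_subset_Ioi_self).ofReal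
  have ftc := intervalIntegral.integral_eq_sub_of_hasDerivAt_of_le hr g_cont g_deriv
    integrand_integrable.neg
  rw [intervalIntegral.integral_neg, intervalIntegral.integral_ofReal] at ftc
  simpa [g, ein] using ftc.symm

lemma tendsto_ein_ofReal_sub_log :
    Tendsto (fun r : ℝ ↦ ein r - Real.log r) atTop (𝓝 eulerMascheroniConstant) := by
  have integral_tendsto : Tendsto (fun r ↦ ∫ t in (0 : ℝ)..r, Real.log t * Real.exp (-t)) atTop
      (𝓝 (-eulerMascheroniConstant)) := by
    rw [← integral_log_mul_exp_neg_Ioi]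
    exact intervalIntegral_tendsto_integral_Ioi 0 integrableOn_log_mul_exp_neg_Ioi tendsto_id
  have exp_mul_log_tendsto : Tendsto (fun r ↦ Real.exp (-r) * Real.log r) atTop (𝓝 0) := by
    refine squeeze_zero' ?_ ?_ (Real.tendsto_pow_mul_exp_neg_atTop_nhds_zero 1)
    · filter_upwards [eventually_ge_atTop 1] with r hr
      exact mul_nonneg (Real.exp_pos _).le (Real.log_nonneg hr)
    · filter_upwards [eventually_ge_atTop 0] with r hr
      rw [pow_one, mul_comm]
      exact mul_le_mul_of_nonneg_right (Real.log_le_self hr) (Real.exp_pos _).le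
  have sum_tendsto := (integral_tendsto.neg.sub exp_mul_log_tendsto).ofReal
  rw [neg_neg, sub_zero] at sum_tendsto
  refine sum_tendsto.congr' ?_
  filter_upwards [eventually_ge_atTop 0] with r hr
  have decomposition := ein_ofReal_sub_mul_log hr
  push_cast at decomposition ⊢
  linear_combination -decomposition

lemma ein_mul_exp_sub_ein {z : ℂ} (hz : z ≠ 0) (w : ℂ) :
    ein (z * exp w) - ein z = w * (1 - ∫ s in (0 : ℝ)..1, exp (-(z * exp (w * s)))) := by
  have path_deriv (s : ℝ) : HasDerivAt (fun s : ℝ ↦ ein (z * exp (w * s)))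
      (w * (1 - exp (-(z * exp (w * s))))) s := by
    have exp_deriv : HasDerivAt (fun s : ℂ ↦ z * exp (w * s)) (z * (exp (w * s) * w)) s :=
      (hasDerivAt_const_mul w).cexp.const_mul z
    have ne_zero : z * exp (w * s) ≠ 0 := mul_ne_zero hz (exp_ne_zero _)
    refine ((hasDerivAt_ein_of_ne_zero ne_zero).comp (s : ℂ) exp_deriv).comp_ofReal.congr_deriv ?_
    field_simp
  have ftc := intervalIntegral.integral_eq_sub_of_hasDerivAt (fun s _ ↦ path_deriv s)
    (Continuous.intervalIntegrable (by fun_prop) 0 1)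
  rw [intervalIntegral.integral_const_mul, intervalIntegral.integral_sub (by simp)
    (Continuous.intervalIntegrable (by fun_prop) 0 1)] at ftc
  simpa using ftc.symm

lemma tendsto_integral_exp_neg_mul_exp {w : ℂ} (hw : |w.im| ≤ Real.pi / 2) :
    Tendsto (fun r : ℝ ↦ ∫ s in (0 : ℝ)..1, exp (-(r * exp (w * s)))) atTop (𝓝 0) := by
  have norm_eq (r s : ℝ) : ‖exp (-(r * exp (w * s)))‖ =
      Real.exp (-(r * (Real.exp (w.re * s) * Real.cos (w.im * s)))) := by
    simp [norm_exp, exp_re]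
  have abs_im_mul {s : ℝ} (hs : s ∈ Ioc 0 1) : |w.im * s| ≤ Real.pi / 2 * s := by
    rw [abs_mul, abs_of_pos hs.1]
    exact mul_le_mul_of_nonneg_right hw hs.1.le
  rw [show (0 : ℂ) = ∫ _ in (0 : ℝ)..1, 0 by simp]
  refine intervalIntegral.tendsto_integral_filter_of_dominated_convergence (fun _ ↦ 1)
    (.of_forall fun r ↦ Continuous.aestronglyMeasurable (by fun_prop)) ?_ (by simp) ?_
  · filter_upwards [eventually_ge_atTop 0] with r hr
    refine ae_of_all _ fun s hs ↦ ?_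
    rw [uIoc_of_le zero_le_one] at hs
    have cos_nonneg : 0 ≤ Real.cos (w.im * s) := Real.cos_nonneg_of_mem_Icc
      (abs_le.1 ((abs_im_mul hs).trans (mul_le_of_le_one_right (by positivity) hs.2)))
    rw [norm_eq, Real.exp_le_one_iff, neg_nonpos]
    positivity
  · filter_upwards [Measure.ae_ne volume 1] with s hs1 hs
    rw [uIoc_of_le zero_le_one] at hs
    have cos_pos : 0 < Real.cos (w.im * s) := Real.cos_pos_of_mem_Ioo
      (abs_lt.1 ((abs_im_mul hs).trans_lt
        (mul_lt_of_lt_one_right (by positivity) (lt_of_le_of_ne hs.2 hs1))))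
    rw [tendsto_zero_iff_norm_tendsto_zero]
    simp_rw [norm_eq]
    exact Real.tendsto_exp_neg_atTop_nhds_zero.comp (tendsto_id.atTop_mul_const (by positivity))

lemma tendsto_ein_exp_mul_sub_log {w : ℂ} (hw : |w.im| ≤ Real.pi / 2) :
    Tendsto (fun r : ℝ ↦ ein (exp w * r) - Real.log r) atTop
      (𝓝 (eulerMascheroniConstant + w)) := by
  have sum_tendsto := tendsto_ein_ofReal_sub_log.add
    (((tendsto_integral_exp_neg_mul_exp hw).const_sub 1).const_mul w)
  rw [sub_zero, mul_one] at sum_tendsto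
  refine sum_tendsto.congr' ?_
  filter_upwards [eventually_ne_atTop 0] with r hr
  rw [← ein_mul_exp_sub_ein (ofReal_ne_zero.2 hr), mul_comm (exp w)]
  ring

lemma tendsto_integral_exp_neg_exp_mul_div {w : ℂ} (hw : |w.im| ≤ Real.pi / 2) {a : ℝ}
    (ha : 0 < a) :
    Tendsto (fun T : ℝ ↦ ∫ u in a..T, exp (-(exp w * u)) / u) atTop
      (𝓝 (ein (exp w * a) - Real.log a - (eulerMascheroniConstant + w))) := by
  refine ((tendsto_ein_exp_mul_sub_log hw).const_sub _).congr' ?_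
  filter_upwards [eventually_gt_atTop 0] with T hT
  exact (integral_exp_neg_mul_div (exp w) ha hT).symm

lemma integral_cos_div_eq_re {a b : ℝ} (ha : 0 < a) (hb : 0 < b) :
    ∫ u in a..b, Real.cos u / u = (∫ u in a..b, exp (-(-I * u)) / u).re := by
  rw [← RCLike.re_eq_complex_re, ← intervalIntegral.intervalIntegral_re
    (intervalIntegrable_exp_neg_mul_div (-I) ha hb)]
  congr! 2 with u
  simp [div_ofReal_re, exp_re]

lemma tendsto_integral_cos_div {a : ℝ} (ha : 0 < a) :
    Tendsto (fun T : ℝ ↦ ∫ u in a..T, Real.cos u / u) atTop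
      (𝓝 ((ein (-I * a)).re - Real.log a - eulerMascheroniConstant)) := by
  have complex_tendsto := tendsto_integral_exp_neg_exp_mul_div (w := -Real.pi / 2 * I)
    (by simp [abs_div, abs_of_pos Real.pi_pos]) ha
  rw [exp_neg_pi_div_two_mul_I] at complex_tendsto
  have re_tendsto := (continuous_re.tendsto _).comp complex_tendsto
  have re_limit : (ein (-I * a) - Real.log a -
      (eulerMascheroniConstant + -Real.pi / 2 * I)).re =
      (ein (-I * a)).re - Real.log a - eulerMascheroniConstant := by
    simp
  rw [re_limit] at re_tendsto
  refine re_tendsto.congr' ?_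
  filter_upwards [eventually_gt_atTop 0] with T hT
  exact (integral_cos_div_eq_re ha hT).symm

lemma integral_sin_div_eq_neg_im_ein (x : ℝ) :
    ∫ u in (0 : ℝ)..x, Real.sin u / u = -(ein (-I * x)).im := by
  rw [ein_mul_ofReal, ← RCLike.im_eq_complex_im, ← intervalIntegral.intervalIntegral_im
    (intervalIntegrable_one_sub_exp_neg_mul_div (-I) 0 x), ← intervalIntegral.integral_neg]
  congr! 2 with u
  simp [div_ofReal_im, exp_im, neg_div]

lemma integral_exp_mul_sub_one_div_eq_neg_ein (z c : ℂ) :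
    (∫ v in (0 : ℝ)..1, if v = 0 then c else (exp (z * v) - 1) / v) = -ein (-z) := by
  rw [ein, ← intervalIntegral.integral_neg]
  refine intervalIntegral.integral_congr_ae ?_
  filter_upwards [Measure.ae_ne volume 0] with v hv _
  rw [if_neg hv, neg_mul, neg_neg, ← neg_div, neg_sub]

end

/-- For `λ > 0`,
`∫_0^1 (e^{iλv}-1)/v dv = -(γ + ∫_λ^∞ cos u/u du + ln λ) + i ∫_0^λ sin u/u du`,
where `∫_λ^∞ cos u/u du` is the convergent improper integral `lim_{T→∞} ∫_λ^T cos u/u du`,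
and the integrand `(e^{iλv}-1)/v` is extended continuously by `iλ` at `v = 0`. -/
theorem integral_formula_for_log_char_function (lam : ℝ) (hlam : 0 < lam) :
    ∃ L : ℝ,
      Tendsto (fun T : ℝ => ∫ u in lam..T, Real.cos u / u) atTop (𝓝 L) ∧
      (∫ v in (0:ℝ)..1, if v = 0 then Complex.I * lam
          else (Complex.exp (Complex.I * lam * v) - 1) / v) =
        ((-(Real.eulerMascheroniConstant + L + Real.log lam) : ℝ) : ℂ) +
          Complex.I * ((∫ u in (0:ℝ)..lam, Real.sin u / u : ℝ) : ℂ) := by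
  refine ⟨_, tendsto_integral_cos_div hlam, ?_⟩
  rw [integral_exp_mul_sub_one_div_eq_neg_ein, integral_sin_div_eq_neg_im_ein, ← neg_mul]
  apply Complex.ext <;> simp
end

section
/- One has lim_{x→0+} ( −∫_x^∞ (cos u)/u du − ln x ) = γ, where ∫_x^∞ (cos u)/u du denotes the convergent improper integral lim_{T→∞} ∫_x^T (cos u)/u du. -/
open Filter
open scoped Topology

/-!
Let `Cin x = ∫_0^x (1 - cos u) / u du`, so that `∫_x^T cos u / u du` equals
`(log T - Cin T) - (log x - Cin x)`. As `Cin` is continuous and vanishes at `0`, everything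
reduces to `Cin T - log T → γ` as `T → ∞`, and since the derivative `-cos T / T` of the left-hand
side tends to `0`, it is enough to let `T` run through the multiples of `π`.

Rescaling gives `Cin (n π) = ∫_0^{π/2} (1 - cos (2 n t)) / t dt`. Replacing `1 / t` by `1 / sin t`
yields the elementary integral `∑_{k < n} 2 / (2 k + 1) = 2 H_{2n} - H_n`, and by the
Riemann–Lebesgue lemma the error converges to `∫_0^{π/2} (1 / sin t - 1 / t) dt = log (4 / π)`.
-/

namespace CosineIntegral

open MeasureTheory Real Asymptotics

theorem isLittleO_sub_of_tendsto_deriv_zero {α E : Type*} [NormedAddCommGroup E] [NormedSpace ℝ E]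
    {f f' : ℝ → E} {l : Filter α} {a b : α → ℝ} (hf : ∀ᶠ x in atTop, HasDerivAt f (f' x) x)
    (hf' : Tendsto f' atTop (𝓝 0)) (ha : Tendsto a l atTop) (hb : Tendsto b l atTop) :
    (fun i => f (b i) - f (a i)) =o[l] fun i => b i - a i := by
  refine isLittleO_iff.2 fun ε hε => ?_
  have hsmall : ∀ᶠ x in atTop, ‖f' x‖ ≤ ε := by
    filter_upwards [hf'.norm.eventually_lt_const (by simpa using hε)] with x hx using hx.le
  obtain ⟨M, hM⟩ := eventually_atTop.1 (hf.and hsmall)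
  filter_upwards [ha.eventually_ge_atTop M, hb.eventually_ge_atTop M] with i hai hbi
  exact (convex_Ici M).norm_image_sub_le_of_norm_hasDerivWithin_le
    (fun x hx => (hM x hx).1.hasDerivWithinAt) (fun x hx => (hM x hx).2) hai hbi

theorem tendsto_atTop_of_tendsto_nat_mul_of_tendsto_deriv_zero {E : Type*}
    [NormedAddCommGroup E] [NormedSpace ℝ E] {f f' : ℝ → E} {c : ℝ} {L : E} (hc : 0 < c)
    (hf : ∀ᶠ x in atTop, HasDerivAt f (f' x) x)
    (hf' : Tendsto f' atTop (𝓝 0)) (hL : Tendsto (fun n : ℕ => f (n * c)) atTop (𝓝 L)) :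
    Tendsto f atTop (𝓝 L) := by
  have hfloor : Tendsto (fun x : ℝ => ⌊x / c⌋₊) atTop atTop :=
    tendsto_nat_floor_atTop.comp (tendsto_id.atTop_div_const hc)
  have hmul : Tendsto (fun x : ℝ => (⌊x / c⌋₊ : ℝ) * c) atTop atTop :=
    (tendsto_natCast_atTop_atTop.comp hfloor).atTop_mul_const hc
  have hgap : (fun x : ℝ => x - ⌊x / c⌋₊ * c) =O[atTop] fun _ => (1 : ℝ) := by
    refine .of_bound c ?_
    filter_upwards [eventually_ge_atTop 0] with x hx
    have hlower : ⌊x / c⌋₊ * c ≤ x := (le_div_iff₀ hc).1 (Nat.floor_le (by positivity))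
    have hupper : x < (⌊x / c⌋₊ + 1) * c := (div_lt_iff₀ hc).1 (Nat.lt_floor_add_one _)
    rw [norm_one, mul_one, norm_of_nonneg (by linarith)]
    linarith
  have hdiff : Tendsto (fun x => f x - f (⌊x / c⌋₊ * c)) atTop (𝓝 0) :=
    (isLittleO_one_iff ℝ).1
      ((isLittleO_sub_of_tendsto_deriv_zero hf hf' hmul tendsto_id).trans_isBigO hgap)
  simpa using hdiff.add (hL.comp hfloor)

theorem tendsto_integral_cos_mul_cocompact {f : ℝ → ℝ} (hf : Integrable f) :
    Tendsto (fun ω : ℝ => ∫ t, cos (ω * t) * f t) (cocompact ℝ) (𝓝 0) := by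
  have hscale : Tendsto (fun ω : ℝ => ω * (2 * π)⁻¹) (cocompact ℝ) (cocompact ℝ) :=
    (Homeomorph.mulRight₀ (2 * π)⁻¹ (by positivity)).isClosedEmbedding.tendsto_cocompact
  have hre := (Complex.continuous_re.tendsto 0).comp
    ((Real.tendsto_integral_exp_smul_cocompact fun t => (f t : ℂ)).comp hscale)
  rw [Complex.zero_re] at hre
  refine hre.congr fun ω => ?_
  have hint : Integrable fun t : ℝ => fourierChar (-(t * (ω * (2 * π)⁻¹))) • (f t : ℂ) := by
    simpa [mul_comm] using
      (Real.fourierIntegral_convergent_iff (μ := volume) (ω * (2 * π)⁻¹)).2 hf.ofReal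
  refine (Complex.reCLM.integral_comp_comm hint).symm.trans (integral_congr_ae (.of_forall ?_))
  intro t
  have hphase : 2 * π * -(t * (ω * (2 * π)⁻¹)) = -(ω * t) := by field_simp
  simp only [Complex.reCLM_apply]
  rw [Circle.smul_def, fourierChar_apply, smul_eq_mul, Complex.re_mul_ofReal,
    Complex.exp_ofReal_mul_I_re, hphase, cos_neg]

theorem tendsto_intervalIntegral_cos_mul_cocompact {f : ℝ → ℝ} {a b : ℝ}
    (hf : IntervalIntegrable f volume a b) :
    Tendsto (fun ω : ℝ => ∫ t in a..b, cos (ω * t) * f t) (cocompact ℝ) (𝓝 0) := by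
  have hIoc : ∀ {c d : ℝ}, IntegrableOn f (Set.Ioc c d) →
      Tendsto (fun ω : ℝ => ∫ t in Set.Ioc c d, cos (ω * t) * f t) (cocompact ℝ) (𝓝 0) := by
    intro c d hcd
    refine (tendsto_integral_cos_mul_cocompact
      (hcd.integrable_indicator measurableSet_Ioc)).congr fun ω => ?_
    rw [← integral_indicator measurableSet_Ioc]
    simp only [Set.indicator_mul_right]
  simpa only [intervalIntegral, sub_zero] using (hIoc hf.1).sub (hIoc hf.2)

theorem one_sub_cos_div_eq_sin_mul_sinc (u : ℝ) :
    (1 - cos u) / u = sin (u / 2) * sinc (u / 2) := by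
  rcases eq_or_ne u 0 with rfl | hu
  · simp
  · have hcos : cos u = 1 - 2 * sin (u / 2) ^ 2 := by
      rw [← cos_sq_add_sin_sq (u / 2), ← mul_div_cancel₀ u two_ne_zero, cos_two_mul']
      ring_nf
    rw [sinc_of_ne_zero (by positivity), hcos]
    field_simp
    ring

theorem continuous_one_sub_cos_div : Continuous fun u : ℝ => (1 - cos u) / u := by
  simp_rw [one_sub_cos_div_eq_sin_mul_sinc]
  have := continuous_sinc
  fun_prop

theorem one_sub_cos_mul_div (ω t : ℝ) :
    (1 - cos (ω * t)) / t = ω * ((1 - cos (ω * t)) / (ω * t)) := by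
  rcases eq_or_ne ω 0 with rfl | hω
  · simp
  · rw [mul_div_assoc', mul_div_mul_left _ _ hω]

theorem continuous_one_sub_cos_mul_div (ω : ℝ) :
    Continuous fun t : ℝ => (1 - cos (ω * t)) / t := by
  simp_rw [one_sub_cos_mul_div ω]
  exact (continuous_one_sub_cos_div.comp (continuous_const_mul ω)).const_mul ω

/-- The entire cosine integral `Cin x = ∫_0^x (1 - cos u) / u du`, which carries all of the cosine
integral except its logarithmic singularity at `0`. The convention `0 / 0 = 0` makes the integrand
continuous. -/
noncomputable def entireCosIntegral (x : ℝ) : ℝ := ∫ u in (0 : ℝ)..x, (1 - cos u) / u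

theorem hasDerivAt_entireCosIntegral (x : ℝ) :
    HasDerivAt entireCosIntegral ((1 - cos x) / x) x :=
  continuous_one_sub_cos_div.integral_hasStrictDerivAt 0 x |>.hasDerivAt

theorem tendsto_entireCosIntegral_zero : Tendsto entireCosIntegral (𝓝 0) (𝓝 0) := by
  simpa [entireCosIntegral] using (hasDerivAt_entireCosIntegral 0).continuousAt.tendsto

theorem hasDerivAt_entireCosIntegral_sub_log {x : ℝ} (hx : x ≠ 0) :
    HasDerivAt (fun y => entireCosIntegral y - log y) (-(cos x / x)) x := by
  have hvalue : -(cos x / x) = (1 - cos x) / x - x⁻¹ := by ring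
  rw [hvalue]
  exact (hasDerivAt_entireCosIntegral x).sub (hasDerivAt_log hx)

theorem integral_cos_div {a b : ℝ} (ha : 0 < a) (hb : 0 < b) :
    ∫ u in a..b, cos u / u =
      (entireCosIntegral a - log a) - (entireCosIntegral b - log b) := by
  have hne : ∀ u ∈ Set.uIcc a b, u ≠ 0 := fun u hu => ((lt_min ha hb).trans_le hu.1).ne'
  have hint : IntervalIntegrable (fun u => -(cos u / u)) volume a b :=
    (continuousOn_cos.div continuousOn_id hne).neg.intervalIntegrable
  have hftc := intervalIntegral.integral_eq_sub_of_hasDerivAt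
    (fun u hu => hasDerivAt_entireCosIntegral_sub_log (hne u hu)) hint
  rw [intervalIntegral.integral_neg] at hftc
  linarith

theorem entireCosIntegral_mul (ω x : ℝ) :
    entireCosIntegral (ω * x) = ∫ t in (0 : ℝ)..x, (1 - cos (ω * t)) / t := by
  simp_rw [one_sub_cos_mul_div ω]
  rw [intervalIntegral.integral_const_mul,
    intervalIntegral.mul_integral_comp_mul_left (f := fun u => (1 - cos u) / u), mul_zero,
    entireCosIntegral]

theorem one_add_cos_pos {t : ℝ} (h0 : 0 ≤ t) (hπ : t < π) : 0 < 1 + cos t := by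
  have := cos_lt_cos_of_nonneg_of_le_pi h0 le_rfl hπ
  rw [cos_pi] at this
  linarith

theorem sinc_pos {t : ℝ} (h0 : 0 ≤ t) (hπ : t < π) : 0 < sinc t := by
  rcases h0.eq_or_lt with rfl | h0
  · simp
  · rw [sinc_of_ne_zero h0.ne']
    exact div_pos (sin_pos_of_pos_of_lt_pi h0 hπ) h0

section InvSinSubInv

variable {x : ℝ}

theorem continuousOn_log_sinc_sub_log_one_add_cos :
    ContinuousOn (fun t => log (sinc t) - log (1 + cos t)) (Set.Ico 0 π) :=
  (continuous_sinc.continuousOn.log fun _ ht => (sinc_pos ht.1 ht.2).ne').sub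
    (ContinuousOn.log (by fun_prop) fun _ ht => (one_add_cos_pos ht.1 ht.2).ne')

theorem hasDerivAt_log_sinc_sub_log_one_add_cos (hx : x ∈ Set.Ioo 0 π) :
    HasDerivAt (fun t => log (sinc t) - log (1 + cos t)) ((sin x)⁻¹ - x⁻¹) x := by
  have hx0 : x ≠ 0 := hx.1.ne'
  have hsin : sin x ≠ 0 := (sin_pos_of_mem_Ioo hx).ne'
  have hcos : 1 + cos x ≠ 0 := (one_add_cos_pos hx.1.le hx.2).ne'
  have hderiv : HasDerivAt (fun t => log (sin t) - log t - log (1 + cos t))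
      (cos x / sin x - x⁻¹ - -sin x / (1 + cos x)) x :=
    (((hasDerivAt_sin x).log hsin).sub (hasDerivAt_log hx0)).sub
      (((hasDerivAt_cos x).const_add 1).log hcos)
  have hvalue : cos x / sin x - x⁻¹ - -sin x / (1 + cos x) = (sin x)⁻¹ - x⁻¹ := by
    field_simp
    linear_combination x * sin_sq_add_cos_sq x
  rw [← hvalue]
  refine hderiv.congr_of_eventuallyEq ?_
  filter_upwards [isOpen_Ioo.mem_nhds hx] with t ht
  rw [sinc_of_ne_zero ht.1.ne', log_div (sin_pos_of_mem_Ioo ht).ne' ht.1.ne']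

theorem intervalIntegrable_inv_sin_sub_inv (hx0 : 0 ≤ x) (hxπ : x < π) :
    IntervalIntegrable (fun t => (sin t)⁻¹ - t⁻¹) volume 0 x := by
  refine intervalIntegral.intervalIntegrable_deriv_of_nonneg
    (g := fun t => log (sinc t) - log (1 + cos t)) ?_ ?_ ?_
  · rw [Set.uIcc_of_le hx0]
    exact continuousOn_log_sinc_sub_log_one_add_cos.mono (Set.Icc_subset_Ico_right hxπ)
  all_goals
    rw [min_eq_left hx0, max_eq_right hx0]
    intro t ht
    have htπ : t ∈ Set.Ioo 0 π := ⟨ht.1, ht.2.trans hxπ⟩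
  · exact hasDerivAt_log_sinc_sub_log_one_add_cos htπ
  · exact sub_nonneg.2 (inv_anti₀ (sin_pos_of_mem_Ioo htπ) (sin_le ht.1.le))

theorem integral_inv_sin_sub_inv (hx0 : 0 ≤ x) (hxπ : x < π) :
    ∫ t in (0 : ℝ)..x, ((sin t)⁻¹ - t⁻¹) = log (sinc x) - log (1 + cos x) + log 2 := by
  rw [intervalIntegral.integral_eq_sub_of_hasDerivAt_of_le hx0
    (continuousOn_log_sinc_sub_log_one_add_cos.mono (Set.Icc_subset_Ico_right hxπ))
    (fun t ht => hasDerivAt_log_sinc_sub_log_one_add_cos ⟨ht.1, ht.2.trans hxπ⟩)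
    (intervalIntegrable_inv_sin_sub_inv hx0 hxπ)]
  norm_num

theorem integral_one_sub_cos_div_sin (hx0 : 0 ≤ x) (hxπ : x < π) (ω : ℝ) :
    ∫ t in (0 : ℝ)..x, (1 - cos (ω * t)) / sin t =
      entireCosIntegral (ω * x) + (∫ t in (0 : ℝ)..x, ((sin t)⁻¹ - t⁻¹)) -
        ∫ t in (0 : ℝ)..x, cos (ω * t) * ((sin t)⁻¹ - t⁻¹) := by
  have hdiff := intervalIntegrable_inv_sin_sub_inv hx0 hxπ
  have hcos : IntervalIntegrable (fun t => cos (ω * t) * ((sin t)⁻¹ - t⁻¹)) volume 0 x :=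
    hdiff.continuousOn_mul (by fun_prop)
  have hcin : IntervalIntegrable (fun t => (1 - cos (ω * t)) / t) volume 0 x :=
    (continuous_one_sub_cos_mul_div ω).intervalIntegrable 0 x
  rw [entireCosIntegral_mul, ← intervalIntegral.integral_add hcin hdiff,
    ← intervalIntegral.integral_sub (hcin.add hdiff) hcos]
  congr with t
  ring

theorem tendsto_entireCosIntegral_mul_sub_integral (hx0 : 0 ≤ x) (hxπ : x < π) :
    Tendsto (fun ω => entireCosIntegral (ω * x) - ∫ t in (0 : ℝ)..x, (1 - cos (ω * t)) / sin t)
      (cocompact ℝ) (𝓝 (-∫ t in (0 : ℝ)..x, ((sin t)⁻¹ - t⁻¹))) := by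
  have hRL := tendsto_intervalIntegral_cos_mul_cocompact
    (intervalIntegrable_inv_sin_sub_inv hx0 hxπ)
  rw [← zero_sub]
  refine (hRL.sub_const _).congr fun ω => ?_
  rw [integral_one_sub_cos_div_sin hx0 hxπ]
  ring

end InvSinSubInv

theorem sum_two_mul_sin_odd_mul_sin (n : ℕ) (t : ℝ) :
    ∑ k ∈ Finset.range n, 2 * sin ((2 * k + 1) * t) * sin t = 1 - cos (2 * n * t) := by
  have htelescope (k : ℕ) : 2 * sin ((2 * k + 1) * t) * sin t =
      cos (2 * k * t) - cos (2 * (k + 1 : ℕ) * t) := by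
    rw [two_mul_sin_mul_sin]
    push_cast
    ring_nf
  simp_rw [htelescope, Finset.sum_range_sub' fun k : ℕ => cos (2 * k * t)]
  simp

theorem integral_sin_odd_mul (k : ℕ) :
    ∫ t in (0 : ℝ)..π / 2, sin ((2 * k + 1) * t) = 1 / (2 * k + 1) := by
  have hcos : cos ((2 * k + 1) * (π / 2)) = 0 :=
    cos_eq_zero_iff.2 ⟨k, by push_cast; ring⟩
  rw [intervalIntegral.integral_comp_mul_left _ (by positivity), integral_sin, hcos]
  simp

theorem sum_range_two_div_odd (n : ℕ) :
    ∑ k ∈ Finset.range n, (2 : ℝ) / (2 * k + 1) = 2 * harmonic (2 * n) - harmonic n := by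
  induction n with
  | zero => simp
  | succ n ih =>
    rw [Finset.sum_range_succ, ih, mul_add_one, harmonic_succ, harmonic_succ, harmonic_succ]
    push_cast
    field_simp
    ring

theorem integral_one_sub_cos_two_mul_nat_div_sin (n : ℕ) :
    ∫ t in (0 : ℝ)..π / 2, (1 - cos (2 * n * t)) / sin t =
      2 * harmonic (2 * n) - harmonic n := by
  calc
    _ = ∫ t in (0 : ℝ)..π / 2, ∑ k ∈ Finset.range n, 2 * sin ((2 * k + 1) * t) := by
      refine intervalIntegral.integral_congr_Ioo_of_le (by positivity) fun t ht => ?_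
      have hsin : sin t ≠ 0 := (sin_pos_of_pos_of_lt_pi ht.1 (by linarith [ht.2, pi_pos])).ne'
      rw [← sum_two_mul_sin_odd_mul_sin, ← Finset.sum_mul, mul_div_cancel_right₀ _ hsin]
    _ = ∑ k ∈ Finset.range n, (2 : ℝ) / (2 * k + 1) := by
      rw [intervalIntegral.integral_finsetSum
        fun _ _ => Continuous.intervalIntegrable (by fun_prop) _ _]
      simp_rw [intervalIntegral.integral_const_mul, integral_sin_odd_mul, mul_one_div]
    _ = _ := sum_range_two_div_odd n

theorem tendsto_two_mul_harmonic_sub_harmonic_sub_log :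
    Tendsto (fun n : ℕ => 2 * (harmonic (2 * n) : ℝ) - harmonic n - log n) atTop
      (𝓝 (eulerMascheroniConstant + 2 * log 2)) := by
  have hdouble : Tendsto (fun n : ℕ => 2 * n) atTop atTop :=
    tendsto_id.const_mul_atTop' two_pos
  have hlim := (((tendsto_harmonic_sub_log.comp hdouble).const_mul 2).sub
    tendsto_harmonic_sub_log).add_const (2 * log 2)
  rw [two_mul eulerMascheroniConstant, add_sub_cancel_right] at hlim
  refine hlim.congr' ?_
  filter_upwards [eventually_ne_atTop 0] with n hn
  have hlog : log (2 * n : ℕ) = log 2 + log n := by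
    rw [Nat.cast_mul, Nat.cast_two, log_mul two_ne_zero (Nat.cast_ne_zero.2 hn)]
  rw [Function.comp_apply, hlog]
  ring

theorem tendsto_entireCosIntegral_nat_mul_pi_sub_log :
    Tendsto (fun n : ℕ => entireCosIntegral (n * π) - log (n * π)) atTop
      (𝓝 eulerMascheroniConstant) := by
  have hfreq : Tendsto (fun n : ℕ => 2 * (n : ℝ)) atTop (cocompact ℝ) :=
    (tendsto_natCast_atTop_atTop.const_mul_atTop two_pos).mono_right atTop_le_cocompact
  have herror := (tendsto_entireCosIntegral_mul_sub_integral (x := π / 2) (by positivity)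
    (by linarith [pi_pos])).comp hfreq
  have hconst : ∫ t in (0 : ℝ)..π / 2, ((sin t)⁻¹ - t⁻¹) = 2 * log 2 - log π := by
    rw [integral_inv_sin_sub_inv (by positivity) (by linarith [pi_pos]),
      sinc_of_ne_zero (by positivity), sin_pi_div_two, cos_pi_div_two, one_div_div,
      log_div two_ne_zero pi_ne_zero, add_zero, log_one]
    ring
  have hlim := (herror.add tendsto_two_mul_harmonic_sub_harmonic_sub_log).sub_const (log π)
  rw [hconst, show -(2 * log 2 - log π) + (eulerMascheroniConstant + 2 * log 2) - log π =
    eulerMascheroniConstant by ring] at hlim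
  refine hlim.congr' ?_
  filter_upwards [eventually_ne_atTop 0] with n hn
  rw [Function.comp_apply, integral_one_sub_cos_two_mul_nat_div_sin,
    log_mul (Nat.cast_ne_zero.2 hn) pi_ne_zero, show 2 * (n : ℝ) * (π / 2) = n * π by ring]
  ring

theorem tendsto_cos_div_atTop : Tendsto (fun x : ℝ => cos x / x) atTop (𝓝 0) :=
  tendsto_bdd_div_atTop_nhds_zero (.of_forall neg_one_le_cos) (.of_forall cos_le_one) tendsto_id

theorem tendsto_entireCosIntegral_sub_log_atTop :
    Tendsto (fun x => entireCosIntegral x - log x) atTop (𝓝 eulerMascheroniConstant) := by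
  refine tendsto_atTop_of_tendsto_nat_mul_of_tendsto_deriv_zero pi_pos
    (f' := fun x => -(cos x / x)) ?_ ?_ tendsto_entireCosIntegral_nat_mul_pi_sub_log
  · filter_upwards [eventually_ne_atTop 0] with x hx
    exact hasDerivAt_entireCosIntegral_sub_log hx
  · simpa using tendsto_cos_div_atTop.neg

end CosineIntegral

open CosineIntegral in
/-- `lim_{x→0+} ( -∫_x^∞ cos u/u du - ln x ) = γ`, where `∫_x^∞ cos u/u du` denotes the
convergent improper integral `lim_{T→∞} ∫_x^T cos u/u du`. -/
theorem cosine_integral_limit_euler_mascheroni :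
    ∃ F : ℝ → ℝ,
      (∀ x : ℝ, 0 < x →
        Tendsto (fun T : ℝ => ∫ u in x..T, Real.cos u / u) atTop (𝓝 (F x))) ∧
      Tendsto (fun x : ℝ => -F x - Real.log x) (nhdsWithin 0 (Set.Ioi 0))
        (𝓝 Real.eulerMascheroniConstant) := by
  refine ⟨fun x => (entireCosIntegral x - Real.log x) - Real.eulerMascheroniConstant,
    fun x hx => ?_, ?_⟩
  · refine (tendsto_entireCosIntegral_sub_log_atTop.const_sub _).congr' ?_
    filter_upwards [eventually_gt_atTop 0] with T hT
    exact (integral_cos_div hx hT).symm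
  · have hlim : Tendsto (fun x => Real.eulerMascheroniConstant - entireCosIntegral x)
        (𝓝[>] 0) (𝓝 Real.eulerMascheroniConstant) := by
      simpa using (tendsto_entireCosIntegral_zero.mono_left nhdsWithin_le_nhds).const_sub
        Real.eulerMascheroniConstant
    exact hlim.congr fun x => by ring
end
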